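/- arXiv:1407.5075 — 5 statements merged into one kernel-verified Lean document; each statement's English description precedes it below -/
import Mathlib

section
/- Let G be a graph and let V(G) = V_1 ∪ ... ∪ V_r be a partition of its vertices. If for every pair i, j ∈ [r] the induced subgraph G[V_i ∪ V_j] has separation dimension at most s, then sdim(G) ≤ C·log r + s·r for some absolute constant C (one may take C = 14). -/
/-! The family is built from two parts; throughout, `part v` is the index of the class containing `v`.

*Pairs of edges meeting at most two classes* (`exists_pair_family`).  Colour the pair `{i, j}`
(loops included) by `i + j` in `ℤ/r`.  For a fixed colour `c` the blocks `{i, c - i}` partition the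
classes, so `s` suitable orders of every `G[V_i ∪ V_{c-i}]` can be interleaved into `s` orders of
`V`.  The `r` colours give `s * r` orders.

*Pairs of edges meeting at least three classes.*  For `r ≥ 3`, a union bound (`exists_perms`)
gives `M ≤ 14 log r - 1` permutations of the classes that induce all six orders on every triple and
separate `{i, j}` from `{k, l}` whenever `i, j, k, l` are distinct.  For a finite graph, ordering
the vertices by the rank of their class, with ties broken by one fixed order, finishes the proof:
edges `ab`, `cd` with `a, c ∈ V_i`, `b ∈ V_j`, `d ∈ V_l` and `a` before `c` are separated once
`j, i, l` appear in this order.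

*Infinite vertex sets.*  Orders are injections to `ℕ`, so infinite classes cannot be concatenated.
If `G` has no finite suitable family then `sdim G = 0` by the convention for `sInf ∅`.  Otherwise
`G` is locally finite, or a star together with finitely many edges
(`finite_edges_of_infinite_degree`).  In both cases (`exists_layering`) there are a level function
`ℓ : V → ℕ` with finite fibres and a single order `σ₀` such that the levels of any two disjoint
edges not separated by `σ₀` differ by at most `2`.  For such edges the key `ℓ v + 3 * π (part v)`
compares vertices of different classes exactly as `π` does, and keys with finite fibres can be
refined to injections to `ℕ` (`exists_refine`).  The order `σ₀` accounts for one further member of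
the family. -/

/-- `σ` separates two (disjoint) edges `e`, `f` of a graph: all vertices of one
precede all vertices of the other in the order given by `σ`. -/
def Separates {V : Type*} (σ : V → ℕ) (e f : Sym2 V) : Prop :=
  (∀ u ∈ e, ∀ w ∈ f, σ u < σ w) ∨ (∀ u ∈ f, ∀ w ∈ e, σ u < σ w)

/-- A finite family of linear orders (injective maps to ℕ) on the vertices of `G`
is pairwise suitable if every pair of disjoint edges is separated by some member. -/
def PairwiseSuitable {V : Type*} (G : SimpleGraph V) (F : Finset (V → ℕ)) : Prop :=
  (∀ σ ∈ F, Function.Injective σ) ∧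
  ∀ e ∈ G.edgeSet, ∀ f ∈ G.edgeSet, (∀ v, v ∈ e → v ∉ f) → ∃ σ ∈ F, Separates σ e f

/-- The separation dimension of `G`: minimum size of a pairwise suitable family. -/
noncomputable def sdim {V : Type*} (G : SimpleGraph V) : ℕ :=
  sInf {k | ∃ F : Finset (V → ℕ), PairwiseSuitable G F ∧ F.card = k}

/-! ### Separation in terms of vertices -/

theorem separates_mk {V : Type*} (σ : V → ℕ) (a b c d : V) :
    Separates σ s(a, b) s(c, d) ↔
      ((σ a < σ c ∧ σ a < σ d ∧ σ b < σ c ∧ σ b < σ d) ∨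
       (σ c < σ a ∧ σ c < σ b ∧ σ d < σ a ∧ σ d < σ b)) := by
  simp only [Separates, Sym2.mem_iff]
  constructor
  · rintro (h | h)
    · exact Or.inl ⟨h _ (.inl rfl) _ (.inl rfl), h _ (.inl rfl) _ (.inr rfl),
        h _ (.inr rfl) _ (.inl rfl), h _ (.inr rfl) _ (.inr rfl)⟩
    · exact Or.inr ⟨h _ (.inl rfl) _ (.inl rfl), h _ (.inl rfl) _ (.inr rfl),
        h _ (.inr rfl) _ (.inl rfl), h _ (.inr rfl) _ (.inr rfl)⟩
  · rintro (⟨h1, h2, h3, h4⟩ | ⟨h1, h2, h3, h4⟩)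
    · left
      rintro u (rfl | rfl) w (rfl | rfl) <;> assumption
    · right
      rintro u (rfl | rfl) w (rfl | rfl) <;> assumption

theorem pairwiseSuitable_iff {V : Type*} (G : SimpleGraph V) (F : Finset (V → ℕ)) :
    PairwiseSuitable G F ↔ (∀ σ ∈ F, Function.Injective σ) ∧
      ∀ a b c d, G.Adj a b → G.Adj c d → a ≠ c → a ≠ d → b ≠ c → b ≠ d →
        ∃ σ ∈ F, Separates σ s(a, b) s(c, d) := by
  refine and_congr_right fun _ => ⟨fun h a b c d hab hcd h1 h2 h3 h4 => ?_, fun h e => ?_⟩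
  · refine h _ hab _ hcd ?_
    intro v hv hv'
    rw [Sym2.mem_iff] at hv hv'
    rcases hv with rfl | rfl <;> rcases hv' with rfl | rfl <;> contradiction
  · induction e with | _ a b
    intro hab f
    induction f with | _ c d
    intro hcd hd
    refine h a b c d hab hcd ?_ ?_ ?_ ?_ <;> rintro rfl
    · exact hd a (by simp) (by simp)
    · exact hd a (by simp) (by simp)
    · exact hd b (by simp) (by simp)
    · exact hd b (by simp) (by simp)

theorem sdim_le_of_family {V : Type*} (G : SimpleGraph V) {ι : Type*} [Fintype ι]
    (σ : ι → V → ℕ) (hinj : ∀ t, Function.Injective (σ t))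
    (h : ∀ a b c d, G.Adj a b → G.Adj c d → a ≠ c → a ≠ d → b ≠ c → b ≠ d →
        ∃ t, Separates (σ t) s(a, b) s(c, d)) : sdim G ≤ Fintype.card ι := by
  classical
  have hF : PairwiseSuitable G (Finset.univ.image σ) := by
    rw [pairwiseSuitable_iff]
    refine ⟨by simpa using hinj, fun a b c d h1 h2 h3 h4 h5 h6 => ?_⟩
    simpa using h a b c d h1 h2 h3 h4 h5 h6
  have hle : sdim G ≤ (Finset.univ.image σ).card := Nat.sInf_le ⟨_, hF, rfl⟩
  exact hle.trans Finset.card_image_le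

/-- A set whose induced subgraph has separation dimension at most `s` carries exactly `s` orders
(functions on `V` that are injective on the set) witnessing this, provided the whole graph has some
finite suitable family, which excludes the convention `sInf ∅ = 0`. -/
theorem exists_fin_family {V : Type*} (G : SimpleGraph V) (F : Finset (V → ℕ))
    (hF : PairwiseSuitable G F) (id' : V → ℕ) (hid : Function.Injective id') (S : Set V) (s : ℕ)
    (hs : sdim (G.induce S) ≤ s) :
    ∃ g : Fin s → V → ℕ, (∀ t, Set.InjOn (g t) S) ∧
      ∀ a ∈ S, ∀ b ∈ S, ∀ c ∈ S, ∀ d ∈ S, G.Adj a b → G.Adj c d →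
        a ≠ c → a ≠ d → b ≠ c → b ≠ d → ∃ t, Separates (g t) s(a, b) s(c, d) := by
  classical
  have hne : {k | ∃ F : Finset (S → ℕ), PairwiseSuitable (G.induce S) F ∧ F.card = k}.Nonempty := by
    refine ⟨_, F.image (fun σ => σ ∘ Subtype.val), ?_, rfl⟩
    rw [pairwiseSuitable_iff] at hF ⊢
    constructor
    · intro σ hσ
      obtain ⟨τ, hτ, rfl⟩ := Finset.mem_image.1 hσ
      exact (hF.1 τ hτ).comp Subtype.val_injective
    · intro a b c d hab hcd h1 h2 h3 h4
      obtain ⟨τ, hτ, h⟩ := hF.2 a b c d hab hcd (by simpa [Subtype.ext_iff] using h1)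
        (by simpa [Subtype.ext_iff] using h2) (by simpa [Subtype.ext_iff] using h3)
        (by simpa [Subtype.ext_iff] using h4)
      refine ⟨_, Finset.mem_image_of_mem _ hτ, ?_⟩
      rw [separates_mk] at h ⊢
      exact h
  obtain ⟨F', hF', hcard⟩ := Nat.sInf_mem hne
  rw [pairwiseSuitable_iff] at hF'
  have hc : F'.card ≤ s := hcard.le.trans hs
  -- Enumerate the members of `F'`, and pad with the restriction of `id'` up to length `s`.
  let g : Fin s → S → ℕ := fun t =>
    if h : t.1 < F'.card then (F'.equivFin.symm ⟨t.1, h⟩).1 else fun v => id' v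
  have hg : ∀ t, Function.Injective (g t) := by
    intro t
    by_cases h : t.1 < F'.card
    · simp only [g, h, dif_pos]
      exact hF'.1 _ (F'.equivFin.symm ⟨t.1, h⟩).2
    · simp only [g, h, dif_neg, not_false_eq_true]
      exact hid.comp Subtype.val_injective
  have hgs : ∀ σ ∈ F', ∃ t, g t = σ := by
    intro σ hσ
    let n := F'.equivFin ⟨σ, hσ⟩
    refine ⟨⟨n.1, n.2.trans_le hc⟩, ?_⟩
    simp [g, n]
  refine ⟨fun t v => if h : v ∈ S then g t ⟨v, h⟩ else 0, ?_, ?_⟩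
  · intro t u hu v hv huv
    simp only [hu, hv, dif_pos] at huv
    simpa using hg t huv
  · intro a ha b hb c hc d hd hab hcd h1 h2 h3 h4
    obtain ⟨σ, hσ, h⟩ := hF'.2 ⟨a, ha⟩ ⟨b, hb⟩ ⟨c, hc⟩ ⟨d, hd⟩ hab hcd
      (by simpa using h1) (by simpa using h2) (by simpa using h3) (by simpa using h4)
    obtain ⟨t, rfl⟩ := hgs σ hσ
    refine ⟨t, ?_⟩
    rw [separates_mk] at h ⊢
    simpa only [ha, hb, hc, hd, dif_pos] using h

/-! ### Pairs of edges meeting at most two classes -/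

theorem exists_pair_family {V : Type*} (G : SimpleGraph V) (F : Finset (V → ℕ))
    (hF : PairwiseSuitable G F) (id' : V → ℕ) (hid : Function.Injective id') (r s : ℕ) [NeZero r]
    (part : V → Fin r)
    (hs : ∀ i j, sdim (G.induce {v | part v = i ∨ part v = j}) ≤ s) :
    ∃ σ : Fin r × Fin s → V → ℕ, (∀ t, Function.Injective (σ t)) ∧
      ∀ i j a b c d, (part a = i ∨ part a = j) → (part b = i ∨ part b = j) →
        (part c = i ∨ part c = j) → (part d = i ∨ part d = j) → G.Adj a b → G.Adj c d →
        a ≠ c → a ≠ d → b ≠ c → b ≠ d → ∃ t, Separates (σ t) s(a, b) s(c, d) := by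
  choose g hg hsep using fun i j => exists_fin_family G F hF id' hid _ s (hs i j)
  -- In colour `c` the block of `v` is `{part v, c - part v}`, represented by its minimum.
  let rep : Fin r → V → Fin r := fun c v => min (part v) (c - part v)
  have hrep : ∀ c v, part v = rep c v ∨ part v = c - rep c v := by
    intro c v
    rcases min_choice (part v) (c - part v) with h | h
    · exact Or.inl h.symm
    · right
      change part v = c - min (part v) (c - part v)
      rw [h, sub_sub_cancel]
  refine ⟨fun x v => r * g (rep x.1 v) (x.1 - rep x.1 v) x.2 v + rep x.1 v, ?_, ?_⟩
  · rintro ⟨c, t⟩ u v huv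
    simp only at huv
    have h1 : rep c u = rep c v := by
      have := congrArg (· % r) huv
      simp only [Nat.mul_add_mod, Nat.mod_eq_of_lt (rep c u).2,
        Nat.mod_eq_of_lt (rep c v).2] at this
      exact Fin.ext this
    rw [h1] at huv
    have h2 := Nat.eq_of_mul_eq_mul_left (Nat.pos_of_ne_zero (NeZero.ne r))
      (Nat.add_right_cancel huv)
    refine hg (rep c v) (c - rep c v) t ?_ (hrep c v) h2
    have := hrep c u
    rwa [h1] at this
  · intro i j a b c d ha hb hc hd hab hcd h1 h2 h3 h4
    have key : ∀ v, (part v = i ∨ part v = j) → rep (i + j) v = min i j := by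
      rintro v (h | h)
      · simp [rep, h]
      · simp [rep, h, min_comm]
    have mem : ∀ v, (part v = i ∨ part v = j) →
        v ∈ {v | part v = min i j ∨ part v = i + j - min i j} := by
      intro v hv
      have := hrep (i + j) v
      rwa [key v hv] at this
    obtain ⟨t, ht⟩ := hsep (min i j) (i + j - min i j) a (mem a ha) b (mem b hb) c (mem c hc)
      d (mem d hd) hab hcd h1 h2 h3 h4
    refine ⟨(i + j, t), ?_⟩
    have hr : 0 < r := Nat.pos_of_ne_zero (NeZero.ne r)
    rw [separates_mk] at ht ⊢
    simpa only [key a ha, key b hb, key c hc, key d hd, Nat.add_lt_add_iff_right,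
      Nat.mul_lt_mul_left hr] using ht

/-! ### Layering of graphs with a finite suitable family -/

/-- A key with finite fibres, with ties broken by `id'`, is realised by an injection to `ℕ`: leave
room `B n` for the fibre over `n`. -/
theorem exists_refine {V : Type*} (id' : V → ℕ) (hid : Function.Injective id') (k : V → ℕ)
    (hk : ∀ n, {v | k v = n}.Finite) :
    ∃ σ : V → ℕ, Function.Injective σ ∧ (∀ u w, k u < k w → σ u < σ w) ∧
      (∀ u w, k u = k w → id' u < id' w → σ u < σ w) := by
  have hB : ∀ n, ∃ B, ∀ v, k v = n → id' v < B := by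
    intro n
    obtain ⟨B, hB⟩ := ((hk n).image id').bddAbove
    exact ⟨B + 1, fun v hv => Nat.lt_succ_of_le (hB ⟨v, hv, rfl⟩)⟩
  choose B hB using hB
  have hlt : ∀ u w, k u < k w →
      ∑ m ∈ Finset.range (k u), B m + id' u < ∑ m ∈ Finset.range (k w), B m + id' w := by
    intro u w h
    have h1 : ∑ m ∈ Finset.range (k u + 1), B m ≤ ∑ m ∈ Finset.range (k w), B m :=
      Finset.sum_le_sum_of_subset (Finset.range_mono h)
    rw [Finset.sum_range_succ] at h1
    have := hB (k u) u rfl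
    omega
  refine ⟨fun v => ∑ m ∈ Finset.range (k v), B m + id' v, ?_, hlt, ?_⟩
  · intro u w huw
    simp only at huw
    rcases lt_trichotomy (k u) (k w) with h | h | h
    · have := hlt u w h
      omega
    · rw [h] at huw
      exact hid (by omega)
    · have := hlt w u h
      omega
  · intro u w h h'
    simp only [h]
    omega

/-- Only finitely many edges can be placed entirely before `a`. Infinitely many edges avoiding `a`
would thus include one, `bc`, that no member places before `a`; but only finitely many edges `ax`
can be placed before `bc`. -/
theorem finite_edges_of_infinite_degree {V : Type*} (G : SimpleGraph V) (F : Finset (V → ℕ))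
    (hF : PairwiseSuitable G F) (a : V) (ha : {x | G.Adj a x}.Infinite) :
    {p : V × V | G.Adj p.1 p.2 ∧ p.1 ≠ a ∧ p.2 ≠ a}.Finite := by
  classical
  rw [pairwiseSuitable_iff] at hF
  by_contra hinf
  have hlow : ∀ σ ∈ F, ∀ n, {v | σ v < n}.Finite := fun σ hσ n =>
    (Set.finite_lt_nat n).preimage ((hF.1 σ hσ).injOn)
  have hfin : (⋃ σ ∈ F, {v | σ v < σ a} ×ˢ {v | σ v < σ a}).Finite :=
    F.finite_toSet.biUnion fun σ hσ => (hlow σ hσ _).prod (hlow σ hσ _)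
  obtain ⟨⟨b, c⟩, ⟨hbc, hba, hca⟩, hn⟩ := Set.Infinite.exists_notMem_finite hinf hfin
  have hfin2 : ((⋃ σ ∈ F, {v | σ v < σ b}) ∪ {b, c}).Finite :=
    (F.finite_toSet.biUnion fun σ hσ => hlow σ hσ _).union (by simp)
  obtain ⟨x, hx, hxn⟩ := ha.exists_notMem_finite hfin2
  simp only [Set.mem_union, Set.mem_iUnion, Set.mem_insert_iff, Set.mem_singleton_iff,
    Set.mem_ofPred_eq, Set.mem_prod, not_or, not_exists, not_and] at hn hxn
  obtain ⟨σ, hσ, h⟩ := hF.2 a x b c hx hbc hba.symm hca.symm hxn.2.1 hxn.2.2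
  rw [separates_mk] at h
  rcases h with h | h
  · exact hxn.1 σ hσ h.2.2.1
  · exact hn σ hσ h.1 h.2.2.1

/-- In a countable locally finite graph, vertices can be assigned levels with finite fibres that
differ by at most one along every edge: the level of `v` is the first stage of a growing sequence
of finite sets that contains `v`. -/
theorem exists_lipschitz_level {V : Type*} (G : SimpleGraph V) (id' : V → ℕ)
    (hid : Function.Injective id') (hlf : ∀ a, {x | G.Adj a x}.Finite) :
    ∃ l : V → ℕ, (∀ n, {v | l v = n}.Finite) ∧ ∀ u w, G.Adj u w → l w ≤ l u + 1 := by
  classical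
  let A : ℕ → Set V := fun n => Nat.rec (∅ : Set V)
    (fun n S => S ∪ (⋃ u ∈ S, {x | G.Adj u x}) ∪ {v | id' v ≤ n}) n
  have hA : ∀ n, A (n + 1) = A n ∪ (⋃ u ∈ A n, {x | G.Adj u x}) ∪ {v | id' v ≤ n} :=
    fun n => rfl
  have hfin : ∀ n, (A n).Finite := by
    intro n
    induction n with
    | zero => exact Set.finite_empty
    | succ n ih =>
      rw [hA]
      exact (ih.union (ih.biUnion fun u _ => hlf u)).union
        ((Set.finite_le_nat n).preimage hid.injOn)
  have hex : ∀ v, ∃ n, v ∈ A n := fun v => ⟨id' v + 1, by rw [hA]; right; simp⟩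
  have hmin : ∀ v, ∃ n, v ∈ A n ∧ ∀ m, v ∈ A m → n ≤ m := fun v =>
    ⟨sInf {n | v ∈ A n}, Nat.sInf_mem (s := {n | v ∈ A n}) (hex v), fun m hm => Nat.sInf_le hm⟩
  choose l hl hlmin using hmin
  refine ⟨l, fun n => (hfin n).subset ?_, fun u w huw => hlmin w _ ?_⟩
  · rintro v rfl
    exact hl v
  · rw [hA]
    left; right
    simp only [Set.mem_iUnion]
    exact ⟨u, hl u, huw⟩

theorem exists_layering {V : Type*} (G : SimpleGraph V) (F : Finset (V → ℕ))
    (hF : PairwiseSuitable G F) (id' : V → ℕ) (hid : Function.Injective id') :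
    ∃ (σ₀ l : V → ℕ), Function.Injective σ₀ ∧ (∀ n, {v | l v = n}.Finite) ∧
      ∀ a b c d, G.Adj a b → G.Adj c d → a ≠ c → a ≠ d → b ≠ c → b ≠ d →
        Separates σ₀ s(a, b) s(c, d) ∨
        ∀ u ∈ ({a, b, c, d} : Set V), ∀ w ∈ ({a, b, c, d} : Set V), l u ≤ l w + 2 := by
  classical
  by_cases hlf : ∀ a, {x | G.Adj a x}.Finite
  · obtain ⟨l, hl, hlip⟩ := exists_lipschitz_level G id' hid hlf
    obtain ⟨σ, hσ, hσl, -⟩ := exists_refine id' hid l hl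
    refine ⟨σ, l, hσ, hl, fun a b c d hab hcd _ _ _ _ => ?_⟩
    rw [separates_mk]
    by_cases h1 : l a < l c ∧ l a < l d ∧ l b < l c ∧ l b < l d
    · exact .inl (.inl ⟨hσl _ _ h1.1, hσl _ _ h1.2.1, hσl _ _ h1.2.2.1, hσl _ _ h1.2.2.2⟩)
    by_cases h2 : l c < l a ∧ l c < l b ∧ l d < l a ∧ l d < l b
    · exact .inl (.inr ⟨hσl _ _ h2.1, hσl _ _ h2.2.1, hσl _ _ h2.2.2.1, hσl _ _ h2.2.2.2⟩)
    right
    have := hlip _ _ hab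
    have := hlip _ _ hab.symm
    have := hlip _ _ hcd
    have := hlip _ _ hcd.symm
    simp only [Set.mem_insert_iff, Set.mem_singleton_iff]
    rintro u (rfl | rfl | rfl | rfl) w (rfl | rfl | rfl | rfl) <;> omega
  · push Not at hlf
    obtain ⟨a₀, ha₀⟩ := hlf
    have hE := finite_edges_of_infinite_degree G F hF a₀ ha₀
    -- `S` is the set of endpoints of edges avoiding the centre `a₀`; the order `σ₀` lists `S`
    -- first, then `a₀`, then everything else.
    set S : Set V := Prod.fst '' {p : V × V | G.Adj p.1 p.2 ∧ p.1 ≠ a₀ ∧ p.2 ≠ a₀} with hS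
    have hSfin : S.Finite := hE.image _
    have hmem : ∀ u w, G.Adj u w → u ≠ a₀ → w ≠ a₀ → u ∈ S := fun u w h1 h2 h3 =>
      ⟨(u, w), ⟨h1, h2, h3⟩, rfl⟩
    have haS : a₀ ∉ S := by
      rintro ⟨p, ⟨-, h, -⟩, h'⟩
      exact h h'
    obtain ⟨σ, hσ, hσk, -⟩ := exists_refine id' hid
      (fun v => if v ∈ S then 0 else if v = a₀ then 1 else 2 + id' v) (by
        intro n
        refine (hSfin.union ((Set.finite_singleton a₀).union
          ((Set.finite_le_nat n).preimage hid.injOn))).subset ?_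
        intro v hv
        by_cases h1 : v ∈ S
        · exact .inl h1
        by_cases h2 : v = a₀
        · exact .inr (.inl h2)
        · simp only [h1, h2, if_false, Set.mem_ofPred_eq] at hv
          refine .inr (.inr ?_)
          simp only [Set.mem_preimage, Set.mem_ofPred_eq]
          omega)
    refine ⟨σ, fun v => if v ∈ S ∨ v = a₀ then 0 else id' v, hσ, ?_, ?_⟩
    · intro n
      refine (hSfin.union ((Set.finite_singleton a₀).union
          ((Set.finite_le_nat n).preimage hid.injOn))).subset ?_
      intro v hv
      by_cases h1 : v ∈ S
      · exact .inl h1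
      by_cases h2 : v = a₀
      · exact .inr (.inl h2)
      · simp only [h1, h2, or_self, if_false, Set.mem_ofPred_eq] at hv
        refine .inr (.inr ?_)
        simp only [Set.mem_preimage, Set.mem_ofPred_eq]
        omega
    · have hlt1 : ∀ u ∈ S, σ u < σ a₀ := by
        intro u hu
        exact hσk _ _ (by simp [hu, haS])
      have hlt2 : ∀ u ∈ S, ∀ x, x ∉ S → σ u < σ x := by
        intro u hu x hx
        refine hσk _ _ ?_
        simp only [hu, hx, if_true, if_false]
        split_ifs <;> omega
      have hin : ∀ (p q x y : V), (p ∈ S ∨ p = a₀) → (q ∈ S ∨ q = a₀) → (x ∈ S ∨ x = a₀) →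
          (y ∈ S ∨ y = a₀) → ∀ u ∈ ({p, q, x, y} : Set V), ∀ w ∈ ({p, q, x, y} : Set V),
          (if u ∈ S ∨ u = a₀ then 0 else id' u) ≤ (if w ∈ S ∨ w = a₀ then 0 else id' w) + 2 := by
        intro p q x y hp hq hx hy u hu w _
        have : u ∈ S ∨ u = a₀ := by
          simp only [Set.mem_insert_iff, Set.mem_singleton_iff] at hu
          rcases hu with rfl | rfl | rfl | rfl <;> assumption
        simp [this]
      have hin' : ∀ v w, G.Adj v w → w ≠ a₀ → v ∈ S ∨ v = a₀ := by
        intro v w h hw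
        by_cases hv : v = a₀
        · exact .inr hv
        · exact .inl (hmem v w h hv hw)
      intro a b c d hab hcd h1 h2 h3 h4
      rw [separates_mk]
      by_cases haa : a = a₀
      · subst haa
        have hc := hmem c d hcd h1.symm h2.symm
        have hd := hmem d c hcd.symm h2.symm h1.symm
        by_cases hb : b ∈ S
        · exact .inr (hin _ _ _ _ (.inr rfl) (.inl hb) (.inl hc) (.inl hd))
        · exact .inl (.inr ⟨hlt1 c hc, hlt2 c hc b hb, hlt1 d hd, hlt2 d hd b hb⟩)
      by_cases hbb : b = a₀
      · subst hbb
        have hc := hmem c d hcd h3.symm h4.symm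
        have hd := hmem d c hcd.symm h4.symm h3.symm
        by_cases ha : a ∈ S
        · exact .inr (hin _ _ _ _ (.inl ha) (.inr rfl) (.inl hc) (.inl hd))
        · exact .inl (.inr ⟨hlt2 c hc a ha, hlt1 c hc, hlt2 d hd a ha, hlt1 d hd⟩)
      have ha := hmem a b hab haa hbb
      have hb := hmem b a hab.symm hbb haa
      by_cases hc : c ∈ S ∨ c = a₀
      · by_cases hd : d ∈ S ∨ d = a₀
        · exact .inr (hin _ _ _ _ (.inl ha) (.inl hb) hc hd)
        · push Not at hd
          exact .inl (.inl ⟨hlt2 a ha c fun hcS => hd.1 (by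
              have := hin' d c hcd.symm (fun h => haS (h ▸ hcS))
              exact this.resolve_right hd.2), hlt2 a ha d hd.1,
            hlt2 b hb c fun hcS => hd.1 (by
              have := hin' d c hcd.symm (fun h => haS (h ▸ hcS))
              exact this.resolve_right hd.2), hlt2 b hb d hd.1⟩)
      · push Not at hc
        have hd : d ∉ S := fun hdS => hc.1
          ((hin' c d hcd (fun h => haS (h ▸ hdS))).resolve_right hc.2)
        exact .inl (.inl ⟨hlt2 a ha c hc.1, hlt2 a ha d hd, hlt2 b hb c hc.1, hlt2 b hb d hd⟩)

/-! ### Few permutations realising all required patterns -/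

theorem card_triple {r : ℕ} (x y z : Fin r) (hxy : x ≠ y) (hxz : x ≠ z) (hyz : y ≠ z) :
    r.factorial ≤ 6 * (Finset.univ.filter
      fun π : Equiv.Perm (Fin r) => π x < π y ∧ π y < π z).card := by
  classical
  let A : Fin r → Fin r → Fin r → ℕ := fun x y z => (Finset.univ.filter
      fun π : Equiv.Perm (Fin r) => π x < π y ∧ π y < π z).card
  have sw : ∀ (τ : Equiv.Perm (Fin r)) x y z, A (τ x) (τ y) (τ z) = A x y z := by
    intro τ x y z
    simp only [A, Finset.card_filter]
    exact Equiv.sum_comp (Equiv.mulRight τ)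
      (fun π : Equiv.Perm (Fin r) => if π x < π y ∧ π y < π z then 1 else 0)
  have s1 : ∀ x y z, x ≠ z → y ≠ z → A y x z = A x y z := by
    intro x y z h1 h2
    have := sw (Equiv.swap x y) x y z
    rwa [Equiv.swap_apply_left, Equiv.swap_apply_right,
      Equiv.swap_apply_of_ne_of_ne h1.symm h2.symm] at this
  have s2 : ∀ x y z, x ≠ y → x ≠ z → A x z y = A x y z := by
    intro x y z h1 h2
    have := sw (Equiv.swap y z) x y z
    rwa [Equiv.swap_apply_left, Equiv.swap_apply_right,
      Equiv.swap_apply_of_ne_of_ne h1 h2] at this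
  have hcov : r.factorial ≤ A x y z + A y x z + A x z y + A y z x + A z x y + A z y x := by
    have : r.factorial = ∑ π : Equiv.Perm (Fin r), 1 := by simp [Fintype.card_perm]
    rw [this]
    simp only [A, Finset.card_filter, ← Finset.sum_add_distrib]
    refine Finset.sum_le_sum fun π _ => ?_
    have h1 := π.injective.ne hxy
    have h2 := π.injective.ne hxz
    have h3 := π.injective.ne hyz
    split_ifs <;> omega
  have e1 := s1 x y z hxz hyz
  have e2 := s2 x y z hxy hxz
  have e3 := s2 y x z hxy.symm hyz
  have e4 := s1 x z y hxy hyz.symm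
  have e5 := s1 y z x hxy.symm hxz.symm
  change _ ≤ 6 * A x y z
  omega

/-- `π` places `{x, y}` entirely before or entirely after `{z, w}`. -/
def SepQuad {r : ℕ} (π : Equiv.Perm (Fin r)) (x y z w : Fin r) : Prop :=
  (π x < π z ∧ π x < π w ∧ π y < π z ∧ π y < π w) ∨
  (π z < π x ∧ π z < π y ∧ π w < π x ∧ π w < π y)

open Classical in
theorem card_quad {r : ℕ} (x y z w : Fin r) (hxy : x ≠ y) (hxz : x ≠ z) (hxw : x ≠ w)
    (hyz : y ≠ z) (hyw : y ≠ w) (hzw : z ≠ w) :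
    r.factorial ≤ 3 * (Finset.univ.filter
      fun π : Equiv.Perm (Fin r) => SepQuad π x y z w).card := by
  let A : Fin r → Fin r → Fin r → Fin r → ℕ := fun x y z w => (Finset.univ.filter
      fun π : Equiv.Perm (Fin r) => SepQuad π x y z w).card
  have sw : ∀ (τ : Equiv.Perm (Fin r)) x y z w, A (τ x) (τ y) (τ z) (τ w) = A x y z w := by
    intro τ x y z w
    simp only [A, Finset.card_filter]
    exact Equiv.sum_comp (Equiv.mulRight τ)
      (fun π : Equiv.Perm (Fin r) => if SepQuad π x y z w then 1 else 0)
  have e1 : A x z y w = A x y z w := by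
    have := sw (Equiv.swap y z) x y z w
    rwa [Equiv.swap_apply_left, Equiv.swap_apply_right,
      Equiv.swap_apply_of_ne_of_ne hxy hxz,
      Equiv.swap_apply_of_ne_of_ne hyw.symm hzw.symm] at this
  have e2 : A x w z y = A x y z w := by
    have := sw (Equiv.swap y w) x y z w
    rwa [Equiv.swap_apply_left, Equiv.swap_apply_right,
      Equiv.swap_apply_of_ne_of_ne hxy hxw,
      Equiv.swap_apply_of_ne_of_ne hyz.symm hzw] at this
  have hcov : r.factorial ≤ A x y z w + A x z y w + A x w z y := by
    have : r.factorial = ∑ π : Equiv.Perm (Fin r), 1 := by simp [Fintype.card_perm]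
    rw [this]
    simp only [A, Finset.card_filter, ← Finset.sum_add_distrib]
    refine Finset.sum_le_sum fun π _ => ?_
    have h1 := π.injective.ne hxy
    have h2 := π.injective.ne hxz
    have h3 := π.injective.ne hxw
    have h4 := π.injective.ne hyz
    have h5 := π.injective.ne hyw
    have h6 := π.injective.ne hzw
    have : SepQuad π x y z w ∨ SepQuad π x z y w ∨ SepQuad π x w z y := by
      unfold SepQuad
      rcases lt_or_gt_of_ne h1 with h1 | h1 <;> rcases lt_or_gt_of_ne h2 with h2 | h2 <;>
      rcases lt_or_gt_of_ne h3 with h3 | h3 <;> rcases lt_or_gt_of_ne h4 with h4 | h4 <;>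
      rcases lt_or_gt_of_ne h5 with h5 | h5 <;> rcases lt_or_gt_of_ne h6 with h6 | h6 <;>
      first
        | exact .inl (.inl ⟨by assumption, by assumption, by assumption, by assumption⟩)
        | exact .inl (.inr ⟨by assumption, by assumption, by assumption, by assumption⟩)
        | exact .inr (.inl (.inl ⟨by assumption, by assumption, by assumption, by assumption⟩))
        | exact .inr (.inl (.inr ⟨by assumption, by assumption, by assumption, by assumption⟩))
        | exact .inr (.inr (.inl ⟨by assumption, by assumption, by assumption, by assumption⟩))
        | exact .inr (.inr (.inr ⟨by assumption, by assumption, by assumption, by assumption⟩))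
        | (exfalso; omega)
    rcases this with h | h | h <;> simp only [h, if_true] <;> omega
  change _ ≤ 3 * A x y z w
  omega

/-- Union bound: if every constraint `c` fails for at most a proportion `q c` of `α` and the `q c ^ M`
sum to less than one, some `M`-tuple satisfies every constraint at least once. -/
theorem exists_tuple {α κ : Type*} [Fintype α] [Nonempty α] [Fintype κ] (R : κ → α → Prop)
    (q : κ → ℝ) (M : ℕ)
    (hR : ∀ c, ((Set.ncard {a | ¬ R c a} : ℕ) : ℝ) ≤ q c * Fintype.card α)
    (hq : ∑ c, q c ^ M < 1) : ∃ f : Fin M → α, ∀ c, ∃ t, R c (f t) := by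
  classical
  by_contra hcon
  push Not at hcon
  let bad : κ → Finset (Fin M → α) := fun c =>
    Fintype.piFinset fun _ => Finset.univ.filter fun a => ¬ R c a
  have hcov : (Finset.univ : Finset (Fin M → α)) ⊆ Finset.univ.biUnion bad := by
    intro f _
    obtain ⟨c, hc⟩ := hcon f
    simp only [Finset.mem_biUnion, Finset.mem_univ, true_and]
    exact ⟨c, by simpa [bad] using hc⟩
  have h1 : (Fintype.card α) ^ M ≤ ∑ c, (bad c).card := by
    have := (Finset.card_le_card hcov).trans Finset.card_biUnion_le
    simpa using this
  have hpos : (0 : ℝ) < (Fintype.card α : ℝ) ^ M := by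
    have : 0 < Fintype.card α := Fintype.card_pos
    positivity
  have h2 : ((Fintype.card α : ℝ)) ^ M ≤ ∑ c, (q c * Fintype.card α) ^ M := by
    calc ((Fintype.card α : ℝ)) ^ M ≤ ((∑ c, (bad c).card : ℕ) : ℝ) := by exact_mod_cast h1
      _ = ∑ c, ((bad c).card : ℝ) := by push_cast; rfl
      _ ≤ _ := by
        refine Finset.sum_le_sum fun c _ => ?_
        have : (bad c).card = (Set.ncard {a | ¬ R c a}) ^ M := by
          simp [bad, Set.ncard_eq_toFinset_card']
        rw [this]
        push_cast
        exact pow_le_pow_left₀ (by positivity) (hR c) M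
  simp only [mul_pow, ← Finset.sum_mul] at h2
  nlinarith

theorem numeric_bound (r : ℕ) (hr : 3 ≤ r) (M : ℕ) (hM : 14 * Real.logb 2 r ≤ M + 2) :
    (r : ℝ) ^ 3 * (5 / 6) ^ M + (r : ℝ) ^ 4 * (2 / 3) ^ M < 1 := by
  have hr3 : (3 : ℝ) ≤ r := by exact_mod_cast hr
  have hr0 : (0 : ℝ) < r := by linarith
  set L := Real.logb 2 r with hL
  have h2L : (2 : ℝ) ^ L = r := Real.rpow_logb (by norm_num) (by norm_num) hr0
  have hL0 : 0 ≤ L := Real.logb_nonneg (by norm_num) (by linarith)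
  -- If `q ^ 28 ≤ 2 ^ (-k)` then `q ^ (2 * (M + 2)) ≤ q ^ (28 * L) ≤ r ^ (-k)`.
  have main : ∀ (q : ℝ) (k : ℕ), 0 < q → q ≤ 1 → q ^ 28 * 2 ^ k ≤ 1 →
      (q ^ (M + 2)) ^ 2 * (r : ℝ) ^ k ≤ 1 := by
    intro q k hq0 hq1 hqk
    have e1 : (q ^ (M + 2)) ^ 2 ≤ (q ^ 28) ^ L := by
      have a1 : q ^ (M + 2) ≤ q ^ (14 * L) := by
        rw [← Real.rpow_natCast]
        exact Real.rpow_le_rpow_of_exponent_ge hq0 hq1 (by push_cast; linarith)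
      have a2 : (q ^ (14 * L)) ^ 2 = (q ^ 28) ^ L := by
        rw [← Real.rpow_natCast, ← Real.rpow_natCast, ← Real.rpow_mul hq0.le,
          ← Real.rpow_mul hq0.le]
        congr 1
        push_cast
        ring
      rw [← a2]
      exact pow_le_pow_left₀ (by positivity) a1 2
    have e2 : (r : ℝ) ^ k = ((2 : ℝ) ^ k) ^ L := by
      rw [← h2L, ← Real.rpow_natCast, ← Real.rpow_natCast, ← Real.rpow_mul (by norm_num),
        ← Real.rpow_mul (by norm_num), mul_comm]
    calc (q ^ (M + 2)) ^ 2 * (r : ℝ) ^ k ≤ (q ^ 28) ^ L * ((2 : ℝ) ^ k) ^ L := by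
          rw [e2]
          gcongr
      _ = (q ^ 28 * 2 ^ k) ^ L := (Real.mul_rpow (by positivity) (by positivity)).symm
      _ ≤ 1 := Real.rpow_le_one (by positivity) hqk hL0
  have h1 := main (5 / 6) 7 (by norm_num) (by norm_num) (by norm_num)
  have h2 := main (2 / 3) 16 (by norm_num) (by norm_num) (by norm_num)
  rw [pow_add] at h1 h2
  set X : ℝ := (5 / 6) ^ M with hX
  set Y : ℝ := (2 / 3) ^ M with hY
  have hX0 : 0 < X := by positivity
  have hY0 : 0 < Y := by positivity
  have b1 : (r : ℝ) ^ 3 * X ≤ 21 / 25 := by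
    have : 3 * ((r : ℝ) ^ 3 * X) ^ 2 ≤ (36 / 25) ^ 2 := by
      have h : (r : ℝ) * ((r : ℝ) ^ 3 * X) ^ 2 ≤ (36 / 25) ^ 2 := by
        nlinarith [h1]
      nlinarith [sq_nonneg ((r : ℝ) ^ 3 * X)]
    by_contra hc
    push Not at hc
    nlinarith
  have b2 : (r : ℝ) ^ 4 * Y ≤ 1 / 10 := by
    have hr8 : (81 : ℝ) ≤ (r : ℝ) ^ 4 := by
      calc (81 : ℝ) = 3 ^ 4 := by norm_num
        _ ≤ _ := pow_le_pow_left₀ (by norm_num) hr3 4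
    have h : ((r : ℝ) ^ 8 * Y) ≤ 9 / 4 := by
      have : ((r : ℝ) ^ 8 * Y) ^ 2 ≤ (9 / 4) ^ 2 := by nlinarith [h2]
      exact le_of_sq_le_sq this (by norm_num)
    have : (81 : ℝ) * ((r : ℝ) ^ 4 * Y) ≤ (r : ℝ) ^ 8 * Y := by
      have : (r : ℝ) ^ 8 * Y = (r : ℝ) ^ 4 * ((r : ℝ) ^ 4 * Y) := by ring
      rw [this]
      gcongr
    linarith
  linarith

theorem exists_perms (r : ℕ) (hr : 3 ≤ r) (M : ℕ) (hM : 14 * Real.logb 2 r ≤ M + 2) :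
    ∃ π : Fin M → Equiv.Perm (Fin r),
      (∀ x y z, x ≠ y → x ≠ z → y ≠ z → ∃ t, π t x < π t y ∧ π t y < π t z) ∧
      (∀ x y z w, x ≠ y → x ≠ z → x ≠ w → y ≠ z → y ≠ w → z ≠ w →
        ∃ t, SepQuad (π t) x y z w) := by
  classical
  let R3 : Fin r × Fin r × Fin r → Equiv.Perm (Fin r) → Prop := fun c π =>
    c.1 ≠ c.2.1 → c.1 ≠ c.2.2 → c.2.1 ≠ c.2.2 → π c.1 < π c.2.1 ∧ π c.2.1 < π c.2.2
  let R4 : Fin r × Fin r × Fin r × Fin r → Equiv.Perm (Fin r) → Prop := fun c π =>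
    c.1 ≠ c.2.1 → c.1 ≠ c.2.2.1 → c.1 ≠ c.2.2.2 → c.2.1 ≠ c.2.2.1 → c.2.1 ≠ c.2.2.2 →
      c.2.2.1 ≠ c.2.2.2 → SepQuad π c.1 c.2.1 c.2.2.1 c.2.2.2
  have hcompl : ∀ (Q : Equiv.Perm (Fin r) → Prop) [DecidablePred Q],
      (Finset.univ.filter Q).card + Set.ncard {π | ¬ Q π} = r.factorial := by
    intro Q _
    rw [Set.ncard_eq_toFinset_card', Set.toFinset_ofPred, Finset.card_filter_add_card_filter_not]
    simp [Fintype.card_perm]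
  obtain ⟨π, hπ⟩ := exists_tuple (Sum.elim R3 R4) (Sum.elim (fun _ => (5 / 6 : ℝ)) fun _ => 2 / 3) M
    (by
      rintro (⟨x, y, z⟩ | ⟨x, y, z, w⟩)
      · simp only [Sum.elim_inl, Fintype.card_perm, Fintype.card_fin]
        have h1 := hcompl (R3 (x, y, z))
        have h2 : r.factorial ≤ 6 * (Finset.univ.filter (R3 (x, y, z))).card := by
          by_cases h : x ≠ y ∧ x ≠ z ∧ y ≠ z
          · refine (card_triple x y z h.1 h.2.1 h.2.2).trans ?_
            gcongr with σ
            intro h' _ _ _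
            exact h'
          · have : ∀ σ, R3 (x, y, z) σ := fun σ h1 h2 h3 => absurd ⟨h1, h2, h3⟩ h
            simp only [this, Finset.filter_true, Finset.card_univ, Fintype.card_perm,
              Fintype.card_fin]
            omega
        have h3 : 6 * Set.ncard {π | ¬ R3 (x, y, z) π} ≤ 5 * r.factorial := by omega
        have h4 : (6 : ℝ) * Set.ncard {π | ¬ R3 (x, y, z) π} ≤ 5 * r.factorial := by
          exact_mod_cast h3
        linarith
      · simp only [Sum.elim_inr, Fintype.card_perm, Fintype.card_fin]
        have h1 := hcompl (R4 (x, y, z, w))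
        have h2 : r.factorial ≤ 3 * (Finset.univ.filter (R4 (x, y, z, w))).card := by
          by_cases h : x ≠ y ∧ x ≠ z ∧ x ≠ w ∧ y ≠ z ∧ y ≠ w ∧ z ≠ w
          · obtain ⟨g1, g2, g3, g4, g5, g6⟩ := h
            refine (card_quad x y z w g1 g2 g3 g4 g5 g6).trans ?_
            gcongr with σ
            intro h' _ _ _ _ _ _
            exact h'
          · have : ∀ σ, R4 (x, y, z, w) σ := fun σ h1 h2 h3 h4 h5 h6 =>
              absurd ⟨h1, h2, h3, h4, h5, h6⟩ h
            simp only [this, Finset.filter_true, Finset.card_univ, Fintype.card_perm,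
              Fintype.card_fin]
            omega
        have h3 : 3 * Set.ncard {π | ¬ R4 (x, y, z, w) π} ≤ 2 * r.factorial := by omega
        have h4 : (3 : ℝ) * Set.ncard {π | ¬ R4 (x, y, z, w) π} ≤ 2 * r.factorial := by
          exact_mod_cast h3
        linarith)
    (by
      have := numeric_bound r hr M hM
      simp only [Fintype.sum_sum_type, Sum.elim_inl, Sum.elim_inr, Finset.sum_const,
        Finset.card_univ, Fintype.card_prod, Fintype.card_fin, nsmul_eq_mul]
      push_cast
      calc _ = (r : ℝ) ^ 3 * (5 / 6) ^ M + (r : ℝ) ^ 4 * (2 / 3) ^ M := by ring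
        _ < 1 := this)
  refine ⟨π, fun x y z h1 h2 h3 => ?_, fun x y z w h1 h2 h3 h4 h5 h6 => ?_⟩
  · obtain ⟨t, ht⟩ := hπ (.inl (x, y, z))
    exact ⟨t, ht h1 h2 h3⟩
  · obtain ⟨t, ht⟩ := hπ (.inr (x, y, z, w))
    exact ⟨t, ht h1 h2 h3 h4 h5 h6⟩

/-! ### Pairs of edges meeting at least three classes -/

/-- For nearby vertices the order built from `π t` compares different
classes as `π t` does, and equal classes by `(l, id')`, independently of `t`. -/
theorem exists_perm_family {V : Type*} (id' : V → ℕ) (hid : Function.Injective id')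
    (r M : ℕ) (part : V → Fin r) (l : V → ℕ) (hl : ∀ n, {v | l v = n}.Finite)
    (π : Fin M → Equiv.Perm (Fin r))
    (h3 : ∀ x y z, x ≠ y → x ≠ z → y ≠ z → ∃ t, π t x < π t y ∧ π t y < π t z)
    (h4 : ∀ x y z w, x ≠ y → x ≠ z → x ≠ w → y ≠ z → y ≠ w → z ≠ w →
        ∃ t, SepQuad (π t) x y z w) :
    ∃ σ : Fin M → V → ℕ, (∀ t, Function.Injective (σ t)) ∧
      ∀ a b c d, a ≠ c → a ≠ d → b ≠ c → b ≠ d →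
        (∀ u ∈ ({a, b, c, d} : Set V), ∀ w ∈ ({a, b, c, d} : Set V), l u ≤ l w + 2) →
        (¬ ∃ i j, (part a = i ∨ part a = j) ∧ (part b = i ∨ part b = j) ∧
          (part c = i ∨ part c = j) ∧ (part d = i ∨ part d = j)) →
        ∃ t, Separates (σ t) s(a, b) s(c, d) := by
  have hfin : ∀ t n, {v | l v + 3 * (π t (part v)).1 = n}.Finite := by
    intro t n
    refine ((Set.finite_le_nat n).biUnion fun m _ => hl m).subset ?_
    intro v hv
    simp only [Set.mem_ofPred_eq, Set.mem_iUnion, exists_prop] at hv ⊢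
    exact ⟨l v, by omega, rfl⟩
  choose σ hσ hσk hσid using fun t => exists_refine id' hid _ (hfin t)
  have hdiff : ∀ t u w, l u ≤ l w + 2 → π t (part u) < π t (part w) → σ t u < σ t w := by
    intro t u w h1 h2
    refine hσk t u w ?_
    have : (π t (part u)).1 < (π t (part w)).1 := h2
    omega
  have hsame : ∀ u w, part u = part w → u ≠ w →
      (∀ t, σ t u < σ t w) ∨ (∀ t, σ t w < σ t u) := by
    intro u w h hne
    rcases lt_trichotomy (l u) (l w) with h' | h' | h'
    · exact .inl fun t => hσk t u w (by rw [h]; omega)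
    · rcases lt_or_gt_of_ne (hid.ne hne) with h'' | h''
      · exact .inl fun t => hσid t u w (by rw [h, h']) h''
      · exact .inr fun t => hσid t w u (by rw [h, h']) h''
    · exact .inr fun t => hσk t w u (by rw [h]; omega)
  have near : ∀ {a b c d : V},
      (∀ u ∈ ({a, b, c, d} : Set V), ∀ w ∈ ({a, b, c, d} : Set V), l u ≤ l w + 2) →
      (l a ≤ l c + 2 ∧ l a ≤ l d + 2 ∧ l b ≤ l c + 2 ∧ l b ≤ l d + 2) ∧
      (l c ≤ l a + 2 ∧ l c ≤ l b + 2 ∧ l d ≤ l a + 2 ∧ l d ≤ l b + 2) := by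
    intro a b c d hn
    refine ⟨⟨hn _ ?_ _ ?_, hn _ ?_ _ ?_, hn _ ?_ _ ?_, hn _ ?_ _ ?_⟩,
      ⟨hn _ ?_ _ ?_, hn _ ?_ _ ?_, hn _ ?_ _ ?_, hn _ ?_ _ ?_⟩⟩ <;> simp
  -- Two edges sharing exactly one class, that of `a` and `c`.
  have shared : ∀ a b c d, a ≠ c →
      ((l a ≤ l c + 2 ∧ l a ≤ l d + 2 ∧ l b ≤ l c + 2 ∧ l b ≤ l d + 2) ∧
        (l c ≤ l a + 2 ∧ l c ≤ l b + 2 ∧ l d ≤ l a + 2 ∧ l d ≤ l b + 2)) →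
      part a = part c →
      (∀ i j, ¬ ((part a = i ∨ part a = j) ∧ (part b = i ∨ part b = j) ∧
          (part c = i ∨ part c = j) ∧ (part d = i ∨ part d = j))) →
      ∃ t, Separates (σ t) s(a, b) s(c, d) := by
    intro a b c d hac hn h1 hcov
    have h2 : part a ≠ part b := fun h =>
      hcov (part a) (part d) ⟨.inl rfl, .inl h.symm, .inl h1.symm, .inr rfl⟩
    have h5 : part a ≠ part d := fun h =>
      hcov (part a) (part b) ⟨.inl rfl, .inr rfl, .inl h1.symm, .inl h.symm⟩
    have h6 : part b ≠ part d := fun h =>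
      hcov (part a) (part b) ⟨.inl rfl, .inr rfl, .inl h1.symm, .inr h.symm⟩
    obtain ⟨⟨n1, n2, n3, n4⟩, ⟨m1, m2, m3, m4⟩⟩ := hn
    simp only [separates_mk]
    rcases hsame a c h1 hac with h | h
    · obtain ⟨t, ht1, ht2⟩ := h3 (part b) (part a) (part d) h2.symm h6 h5
      exact ⟨t, .inl ⟨h t, hdiff t _ _ n2 ht2, hdiff t _ _ n3 (h1 ▸ ht1),
        hdiff t _ _ n4 (ht1.trans ht2)⟩⟩
    · obtain ⟨t, ht1, ht2⟩ := h3 (part d) (part a) (part b) h5.symm h6.symm h2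
      exact ⟨t, .inr ⟨h t, hdiff t _ _ m2 (h1 ▸ ht2), hdiff t _ _ m3 ht1,
        hdiff t _ _ m4 (ht1.trans ht2)⟩⟩
  refine ⟨σ, hσ, fun a b c d h1 h2 h5 h6 hn hp => ?_⟩
  have hN := near hn
  have hp' : ∀ i j, ¬ ((part a = i ∨ part a = j) ∧ (part b = i ∨ part b = j) ∧
          (part c = i ∨ part c = j) ∧ (part d = i ∨ part d = j)) :=
    fun i j h => hp ⟨i, j, h⟩
  have swapL : Sym2.mk a b = Sym2.mk b a := Sym2.eq_swap
  have swapR : Sym2.mk c d = Sym2.mk d c := Sym2.eq_swap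
  by_cases e1 : part a = part c
  · exact shared a b c d h1 hN e1 hp'
  by_cases e2 : part a = part d
  · rw [swapR]
    exact shared a b d c h2 (by omega) e2
      fun i j h => hp' i j ⟨h.1, h.2.1, h.2.2.2, h.2.2.1⟩
  by_cases e3 : part b = part c
  · rw [swapL]
    exact shared b a c d h5 (by omega) e3
      fun i j h => hp' i j ⟨h.2.1, h.1, h.2.2.1, h.2.2.2⟩
  by_cases e4 : part b = part d
  · rw [swapL, swapR]
    exact shared b a d c h6 (by omega) e4
      fun i j h => hp' i j ⟨h.2.1, h.1, h.2.2.2, h.2.2.1⟩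
  -- From here on the classes of the two edges are disjoint.
  have fin : (∃ t, SepQuad (π t) (part a) (part b) (part c) (part d)) →
      ∃ t, Separates (σ t) s(a, b) s(c, d) := by
    obtain ⟨⟨n1, n2, n3, n4⟩, ⟨m1, m2, m3, m4⟩⟩ := hN
    rintro ⟨t, ⟨g1, g2, g3, g4⟩ | ⟨g1, g2, g3, g4⟩⟩ <;> refine ⟨t, (separates_mk _ _ _ _ _).2 ?_⟩
    · exact .inl ⟨hdiff t _ _ n1 g1, hdiff t _ _ n2 g2, hdiff t _ _ n3 g3, hdiff t _ _ n4 g4⟩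
    · exact .inr ⟨hdiff t _ _ m1 g1, hdiff t _ _ m2 g2, hdiff t _ _ m3 g3, hdiff t _ _ m4 g4⟩
  apply fin
  by_cases e5 : part a = part b
  · obtain ⟨t, g1, g2⟩ := h3 (part a) (part c) (part d) e1 e2 fun h =>
      hp' (part a) (part c) ⟨.inl rfl, .inl e5.symm, .inr rfl, .inr h.symm⟩
    exact ⟨t, .inl ⟨g1, g1.trans g2, e5 ▸ g1, e5 ▸ g1.trans g2⟩⟩
  by_cases e6 : part c = part d
  · obtain ⟨t, g1, g2⟩ := h3 (part a) (part b) (part c) e5 e1 e3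
    exact ⟨t, .inl ⟨g1.trans g2, e6 ▸ g1.trans g2, g2, e6 ▸ g2⟩⟩
  exact h4 _ _ _ _ e5 e1 e2 e3 e4 e6

/-! ### The bound -/

theorem stmt3 {V : Type} (G : SimpleGraph V) (r s : ℕ) (hr : 0 < r)
    (P : Fin r → Set V) (hcover : ∀ v, ∃ i, v ∈ P i)
    (hdisj : ∀ i j, i ≠ j → Disjoint (P i) (P j))
    (hs : ∀ i j, sdim (G.induce (P i ∪ P j)) ≤ s) :
    (sdim G : ℝ) ≤ 14 * Real.logb 2 r + s * r := by
  have : NeZero r := ⟨hr.ne'⟩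
  have hr1 : (1 : ℝ) ≤ r := by exact_mod_cast hr
  have hlog : 0 ≤ Real.logb 2 r := Real.logb_nonneg (by norm_num) hr1
  have hzero : sdim G = 0 → (sdim G : ℝ) ≤ 14 * Real.logb 2 r + s * r := by
    intro h
    rw [h]
    push_cast
    positivity
  -- Without a finite suitable family `sdim G` is `sInf ∅ = 0`.
  by_cases hex : ∃ F : Finset (V → ℕ), PairwiseSuitable G F
  swap
  · refine hzero ?_
    have : {k | ∃ F : Finset (V → ℕ), PairwiseSuitable G F ∧ F.card = k} = ∅ := by
      ext k
      simp only [Set.mem_ofPred_eq, Set.mem_empty_iff_false, iff_false]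
      rintro ⟨F, hF, -⟩
      exact hex ⟨F, hF⟩
    rw [sdim, this, Nat.sInf_empty]
  obtain ⟨F, hF⟩ := hex
  rcases F.eq_empty_or_nonempty with rfl | ⟨id', hid'⟩
  · exact hzero (Nat.le_zero.1 (Nat.sInf_le ⟨∅, hF, rfl⟩))
  have hid := hF.1 id' hid'
  choose part hpart using hcover
  have hP : ∀ i, P i = {v | part v = i} := by
    intro i
    ext v
    refine ⟨fun h => ?_, fun h => h ▸ hpart v⟩
    by_contra hne
    exact Set.disjoint_left.1 (hdisj _ _ hne) (hpart v) h
  have hs' : ∀ i j, sdim (G.induce {v | part v = i ∨ part v = j}) ≤ s := by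
    intro i j
    have := hs i j
    rw [hP, hP] at this
    exact this
  obtain ⟨σ, hσ, hσsep⟩ := exists_pair_family G F hF id' hid r s part hs'
  by_cases hr3 : r < 3
  · have hle : sdim G ≤ Fintype.card (Fin r × Fin s) := by
      refine sdim_le_of_family G σ hσ fun a b c d => ?_
      have h2 : ∀ x : Fin r, x = ⟨0, hr⟩ ∨ x = ⟨r - 1, by omega⟩ := by
        intro x
        simp only [Fin.ext_iff]
        omega
      exact hσsep _ _ a b c d (h2 _) (h2 _) (h2 _) (h2 _)
    simp only [Fintype.card_prod, Fintype.card_fin] at hle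
    have : (sdim G : ℝ) ≤ r * s := by exact_mod_cast hle
    linarith
  push Not at hr3
  have hlog1 : 1 ≤ Real.logb 2 r := by
    rw [Real.le_logb_iff_rpow_le (by norm_num) (by linarith)]
    have : (3 : ℝ) ≤ r := by exact_mod_cast hr3
    norm_num
    linarith
  -- One of the `⌊14 log r⌋` available orders is reserved for `σ₀`.
  obtain ⟨M, hM⟩ : ∃ M, ⌊14 * Real.logb 2 r⌋₊ = M + 1 := by
    refine Nat.exists_eq_succ_of_ne_zero ?_
    have : 1 ≤ ⌊14 * Real.logb 2 r⌋₊ := Nat.le_floor (by push_cast; linarith)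
    omega
  have hM1 : ((M : ℝ) + 1) ≤ 14 * Real.logb 2 r := by
    have := Nat.floor_le (a := 14 * Real.logb 2 r) (by positivity)
    rw [hM] at this
    exact_mod_cast this
  have hM2 : 14 * Real.logb 2 r ≤ M + 2 := by
    have := Nat.lt_floor_add_one (14 * Real.logb 2 r)
    rw [hM] at this
    push_cast at this
    linarith
  obtain ⟨π, hπ3, hπ4⟩ := exists_perms r hr3 M hM2
  obtain ⟨σ₀, l, hσ₀, hl, hlay⟩ := exists_layering G F hF id' hid
  obtain ⟨τ, hτ, hτsep⟩ := exists_perm_family id' hid r M part l hl π hπ3 hπ4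
  have hle : sdim G ≤ Fintype.card ((Fin r × Fin s) ⊕ (Fin M ⊕ Unit)) := by
    refine sdim_le_of_family G (Sum.elim σ (Sum.elim τ fun _ => σ₀)) ?_ ?_
    · rintro (t | t | t)
      · exact hσ t
      · exact hτ t
      · exact hσ₀
    · intro a b c d hab hcd h1 h2 h3 h4
      by_cases hp : ∃ i j, (part a = i ∨ part a = j) ∧ (part b = i ∨ part b = j) ∧
          (part c = i ∨ part c = j) ∧ (part d = i ∨ part d = j)
      · obtain ⟨i, j, pa, pb, pc, pd⟩ := hp
        obtain ⟨t, ht⟩ := hσsep i j a b c d pa pb pc pd hab hcd h1 h2 h3 h4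
        exact ⟨.inl t, ht⟩
      rcases hlay a b c d hab hcd h1 h2 h3 h4 with h | h
      · exact ⟨.inr (.inr ()), h⟩
      · obtain ⟨t, ht⟩ := hτsep a b c d h1 h2 h3 h4 h hp
        exact ⟨.inr (.inl t), ht⟩
  simp only [Fintype.card_sum, Fintype.card_prod, Fintype.card_fin, Fintype.card_unit] at hle
  have : (sdim G : ℝ) ≤ r * s + (M + 1) := by exact_mod_cast hle
  linarith
end

section
/- Let G be a graph with maximum degree Δ ≥ 2^64. Then there exists a partition of V(G) into r = ceil(400·Δ/log₂ Δ) parts V_1, ..., V_r such that for every vertex v of G and every part V_i, the number of neighbors of v lying in V_i is at most (1/2)·log₂ Δ. -/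
open Finset in
/-- The maps `V → Fin r` under which no hyperedge of `E` contained in `A` is monochromatic.
Values outside `A` are unconstrained, so its cardinality is `r ^ |Aᶜ|` times the number of
proper colourings of `A`. -/
noncomputable def good {V : Type*} [Fintype V] (r : ℕ) (E : Finset (Finset V)) (A : Finset V) :
    Finset (V → Fin r) := by
  classical
  exact univ.filter fun f => ∀ S ∈ E, S ⊆ A → ¬ ∀ x ∈ S, ∀ y ∈ S, f x = f y

theorem mem_good {V : Type*} [Fintype V] {r : ℕ} {E : Finset (Finset V)} {A : Finset V}
    {f : V → Fin r} :
    f ∈ good r E A ↔ ∀ S ∈ E, S ⊆ A → ¬ ∀ x ∈ S, ∀ y ∈ S, f x = f y := by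
  simp [good]

/-- Being constant on `insert w T` costs a factor `r ^ |T|` among maps proper on a set disjoint
from `T`: recolouring `T` arbitrarily is injective and preserves properness. -/
theorem card_mono_le {V : Type*} [Fintype V] [DecidableEq V] (r : ℕ) (E : Finset (Finset V))
    (B T : Finset V) (w : V) (hw : w ∉ T) (hBT : Disjoint B T) (X : Finset (V → Fin r))
    (hX : X ⊆ good r E B) (hc : ∀ f ∈ X, ∀ x ∈ T, f x = f w) :
    X.card * r ^ T.card ≤ (good r E B).card := by
  have h1 : (X ×ˢ (Finset.univ : Finset (T → Fin r))).card = X.card * r ^ T.card := by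
    simp [Finset.card_product]
  rw [← h1]
  refine Finset.card_le_card_of_injOn
    (fun p x => if h : x ∈ T then p.2 ⟨x, h⟩ else p.1 x) ?_ ?_
  · rintro ⟨f, g⟩ hp
    have hf : f ∈ X := (Finset.mem_product.1 hp).1
    refine Finset.mem_coe.2 (mem_good.2 ?_)
    intro S hS hSB hm
    refine mem_good.1 (hX hf) S hS hSB ?_
    intro x hx y hy
    have := hm x hx y hy
    have hxT := Finset.disjoint_left.1 hBT (hSB hx)
    have hyT := Finset.disjoint_left.1 hBT (hSB hy)
    simpa [hxT, hyT] using this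
  · rintro ⟨f, g⟩ hp ⟨f', g'⟩ hp' h
    have hf : f ∈ X := (Finset.mem_product.1 hp).1
    have hf' : f' ∈ X := (Finset.mem_product.1 hp').1
    have h2 : ∀ x ∉ T, f x = f' x := fun x hx => by
      simpa [hx] using congrFun h x
    have h3 : f = f' := by
      funext x
      by_cases hx : x ∈ T
      · rw [hc f hf x hx, hc f' hf' x hx, h2 w hw]
      · exact h2 x hx
    have h4 : g = g' := by
      funext ⟨x, hx⟩
      simpa [hx] using congrFun h x
    rw [h3, h4]

/-- If adding one vertex to any set smaller than `A` at most halves the count, then deleting the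
vertices of `D` from `A` increases it by at most a factor `2 ^ |D|`. -/
theorem good_sdiff_le {V : Type*} [Fintype V] [DecidableEq V] (r : ℕ) (E : Finset (Finset V))
    (A : Finset V)
    (ih : ∀ B : Finset V, B.card < A.card → ∀ u ∉ B,
      (good r E B).card ≤ 2 * (good r E (insert u B)).card)
    (D : Finset V) (hD : D ⊆ A) :
    (good r E (A \ D)).card ≤ 2 ^ D.card * (good r E A).card := by
  induction D using Finset.induction_on with
  | empty => simp
  | insert a D ha hi =>
    have haA : a ∈ A := hD (Finset.mem_insert_self a D)
    have h1 := hi fun x hx => hD (Finset.mem_insert_of_mem hx)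
    have h2 : insert a (A \ insert a D) = A \ D := by
      ext x
      simp only [Finset.mem_insert, Finset.mem_sdiff]
      by_cases hx : x = a
      · subst hx; simp [haA, ha]
      · simp [hx]
    have h3 : (A \ insert a D).card < A.card :=
      Finset.card_lt_card ⟨Finset.sdiff_subset, fun h => by simpa using h haA⟩
    have h4 := ih _ h3 a (by simp)
    rw [h2] at h4
    rw [Finset.card_insert_of_notMem ha, pow_succ]
    linarith

/-- Rosenfeld's step: in an `(m+1)`-uniform hypergraph of degree at most `d` with
`d * 2 ^ m ≤ r ^ m`, adding a vertex at most halves the number of proper maps. -/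
theorem good_step {V : Type*} [Fintype V] [DecidableEq V] (r m d : ℕ) (hm : 1 ≤ m) (hr : 0 < r)
    (E : Finset (Finset V)) (hE : ∀ S ∈ E, S.card = m + 1)
    (hd : ∀ u, (E.filter (u ∈ ·)).card ≤ d) (hdr : d * 2 ^ m ≤ r ^ m) :
    ∀ n : ℕ, ∀ A : Finset V, A.card = n → ∀ u ∉ A,
      (good r E A).card ≤ 2 * (good r E (insert u A)).card := by
  intro n
  induction n using Nat.strong_induction_on with
  | _ n ihn =>
  intro A hA u hu
  have ih : ∀ B : Finset V, B.card < A.card → ∀ u ∉ B,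
      (good r E B).card ≤ 2 * (good r E (insert u B)).card :=
    fun B hB => ihn B.card (hA ▸ hB) B rfl
  let bad : Finset V → Finset (V → Fin r) := fun S =>
    (good r E A).filter fun f => S ⊆ insert u A ∧ ∀ x ∈ S, ∀ y ∈ S, f x = f y
  have hcover : good r E A ⊆
      good r E (insert u A) ∪ (E.filter (u ∈ ·)).biUnion bad := by
    intro f hf
    by_cases h : f ∈ good r E (insert u A)
    · exact Finset.mem_union_left _ h
    · refine Finset.mem_union_right _ ?_
      rw [mem_good] at h
      push Not at h
      obtain ⟨S, hS, hSA, hmono⟩ := h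
      have huS : u ∈ S := by
        by_contra huS
        exact mem_good.1 hf S hS ((Finset.subset_insert_iff_of_notMem huS).1 hSA) hmono
      exact Finset.mem_biUnion.2 ⟨S, Finset.mem_filter.2 ⟨hS, huS⟩,
        Finset.mem_filter.2 ⟨hf, hSA, hmono⟩⟩
  have hbad : ∀ S ∈ E.filter (u ∈ ·),
      2 * ((bad S).card * r ^ m) ≤ 2 ^ m * (good r E A).card := by
    intro S hS
    obtain ⟨hSE, huS⟩ := Finset.mem_filter.1 hS
    by_cases hSA : S ⊆ insert u A
    swap
    · simp [bad, hSA]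
    have hcS := hE S hSE
    obtain ⟨w, hwS, hwu⟩ := Finset.exists_mem_ne (by omega : 1 < S.card) u
    have huT : u ∈ S.erase w := Finset.mem_erase.2 ⟨hwu.symm, huS⟩
    have hcT : (S.erase w).card = m := by
      rw [Finset.card_erase_of_mem hwS]; omega
    have hcD : ((S.erase w).erase u).card = m - 1 := by
      rw [Finset.card_erase_of_mem huT, hcT]
    have hDA : (S.erase w).erase u ⊆ A := by
      intro x hx
      simp only [Finset.mem_erase] at hx
      exact (Finset.mem_insert.1 (hSA hx.2.2)).resolve_left hx.1
    have h1 := good_sdiff_le r E A ih _ hDA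
    have h2 := card_mono_le r E (A \ (S.erase w).erase u) (S.erase w) w (by simp)
      (by
        rw [Finset.disjoint_left]
        intro x hx hxT
        rw [Finset.mem_sdiff] at hx
        refine hx.2 (Finset.mem_erase.2 ⟨?_, hxT⟩)
        rintro rfl
        exact hu hx.1)
      (bad S)
      (by
        intro f hf
        have hf := (Finset.mem_filter.1 hf).1
        exact mem_good.2 fun S' hS' hsub =>
          mem_good.1 hf S' hS' (hsub.trans Finset.sdiff_subset))
      (by
        intro f hf x hx
        exact (Finset.mem_filter.1 hf).2.2 x (Finset.mem_of_mem_erase hx) w hwS)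
    rw [hcT] at h2
    rw [hcD] at h1
    obtain ⟨k, rfl⟩ : ∃ k, m = k + 1 := ⟨m - 1, by omega⟩
    rw [Nat.add_sub_cancel] at h1
    rw [pow_succ 2 k]
    linarith
  have hsum : 2 * (((E.filter (u ∈ ·)).biUnion bad).card * r ^ m) ≤
      r ^ m * (good r E A).card := by
    calc 2 * (((E.filter (u ∈ ·)).biUnion bad).card * r ^ m)
        ≤ 2 * ((∑ S ∈ E.filter (u ∈ ·), (bad S).card) * r ^ m) := by
          gcongr; exact Finset.card_biUnion_le
      _ = ∑ S ∈ E.filter (u ∈ ·), 2 * ((bad S).card * r ^ m) := by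
          rw [Finset.sum_mul, Finset.mul_sum]
      _ ≤ (E.filter (u ∈ ·)).card * (2 ^ m * (good r E A).card) := by
          rw [← smul_eq_mul]; exact Finset.sum_le_card_nsmul _ _ _ hbad
      _ ≤ d * (2 ^ m * (good r E A).card) := by gcongr; exact hd u
      _ = d * 2 ^ m * (good r E A).card := by ring
      _ ≤ r ^ m * (good r E A).card := by gcongr
  have hhalf : 2 * ((E.filter (u ∈ ·)).biUnion bad).card ≤ (good r E A).card := by
    refine le_of_mul_le_mul_left (a := r ^ m) ?_ (by positivity)
    linarith
  have hle := (Finset.card_le_card hcover).trans (Finset.card_union_le _ _)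
  omega

theorem exists_proper {V : Type*} [Fintype V] [DecidableEq V] (r m d : ℕ) (hm : 1 ≤ m)
    (hr : 0 < r) (E : Finset (Finset V)) (hE : ∀ S ∈ E, S.card = m + 1)
    (hd : ∀ u, (E.filter (u ∈ ·)).card ≤ d) (hdr : d * 2 ^ m ≤ r ^ m) :
    ∃ f : V → Fin r, ∀ S ∈ E, ¬ ∀ x ∈ S, ∀ y ∈ S, f x = f y := by
  have hpos : ∀ A : Finset V, 0 < (good r E A).card := by
    intro A
    induction A using Finset.induction_on with
    | empty =>
      refine Finset.card_pos.2 ⟨fun _ => ⟨0, hr⟩, mem_good.2 ?_⟩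
      intro S hS hS0
      have := hE S hS
      rw [Finset.subset_empty.1 hS0] at this
      simp at this
    | insert u A hu ih =>
      have := good_step r m d hm hr E hE hd hdr _ A rfl u hu
      omega
  obtain ⟨f, hf⟩ := Finset.card_pos.1 (hpos Finset.univ)
  exact ⟨f, fun S hS => mem_good.1 hf S hS (Finset.subset_univ S)⟩

theorem card_powersetCard_filter_mem_le {V : Type*} [DecidableEq V] (s : Finset V) (u : V)
    (m : ℕ) : ((s.powersetCard (m + 1)).filter (u ∈ ·)).card ≤ s.card.choose m := by
  rw [← Finset.card_powersetCard]
  refine Finset.card_le_card_of_injOn (fun S => S.erase u) ?_ ?_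
  · intro S hS
    simp only [Finset.coe_filter, Set.mem_ofPred_eq, Finset.mem_powersetCard] at hS
    simp only [Finset.mem_coe, Finset.mem_powersetCard]
    refine ⟨(Finset.erase_subset _ _).trans hS.1.1, ?_⟩
    rw [Finset.card_erase_of_mem hS.2]; omega
  · intro S hS S' hS' h
    simp only [Finset.coe_filter, Set.mem_ofPred_eq] at hS hS'
    rw [← Finset.insert_erase hS.2, ← Finset.insert_erase hS'.2]
    exact congrArg (insert u) h

/-- The Local Lemma condition for `d = Δ * (Δ choose m)`. Since `L ≥ 64` gives `m ≥ 32`, one has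
`L ≤ (400 / 192) * m`, so `64 * Δ ≤ r * (m / 3)`; the left side times `m!` is at most
`4 * (8 * Δ) ^ m ≤ (64 * Δ) ^ m`. -/
theorem numeric (Δ r m : ℕ) (L : ℝ) (hL : 64 ≤ L) (hΔ : (Δ : ℝ) = 2 ^ L)
    (hm : m = ⌊L / 2⌋₊) (hr : (400 * Δ : ℝ) / L ≤ r) :
    Δ * Δ.choose m * 2 ^ m ≤ r ^ m := by
  have hm1 : L / 2 < m + 1 := by rw [hm]; exact Nat.lt_floor_add_one _
  have hm32 : 32 ≤ m := by rw [hm]; exact Nat.le_floor (by push_cast; linarith)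
  have hm32' : (32 : ℝ) ≤ m := by exact_mod_cast hm32
  have hΔ4 : (Δ : ℝ) ≤ 4 ^ (m + 1) := by
    rw [hΔ]
    calc (2 : ℝ) ^ L ≤ 2 ^ (((2 * (m + 1) : ℕ)) : ℝ) :=
          Real.rpow_le_rpow_of_exponent_le (by norm_num) (by push_cast; linarith)
      _ = 4 ^ (m + 1) := by rw [Real.rpow_natCast, pow_mul]; norm_num
  have hfac : ((m : ℝ) / 3) ^ m ≤ m.factorial := by
    have h1 := Real.pow_div_factorial_le_exp (m : ℝ) (by positivity) m
    have h2 : Real.exp m ≤ 3 ^ m := by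
      rw [← Real.exp_one_pow]
      gcongr
      linarith [Real.exp_one_lt_d9]
    rw [div_le_iff₀ (by positivity)] at h1
    rw [div_pow, div_le_iff₀ (by positivity)]
    nlinarith [mul_le_mul_of_nonneg_right h2 (Nat.cast_nonneg (α := ℝ) m.factorial)]
  have hch : (Δ.choose m : ℝ) * m.factorial ≤ (Δ : ℝ) ^ m := by
    have := Nat.choose_le_pow_div (α := ℝ) m Δ
    rwa [le_div_iff₀ (by positivity)] at this
  have hr' : 192 * (Δ : ℝ) ≤ r * m := by
    rw [div_le_iff₀ (by linarith)] at hr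
    have hLm : L ≤ 400 / 192 * m := by linarith
    nlinarith [mul_le_mul_of_nonneg_left hLm (Nat.cast_nonneg (α := ℝ) r)]
  have key : (Δ : ℝ) * Δ.choose m * 2 ^ m * m.factorial ≤ r ^ m * m.factorial := by
    calc (Δ : ℝ) * Δ.choose m * 2 ^ m * m.factorial
        = Δ * 2 ^ m * (Δ.choose m * m.factorial) := by ring
      _ ≤ 4 ^ (m + 1) * 2 ^ m * Δ ^ m := by gcongr
      _ = 4 * (8 * Δ) ^ m := by
          rw [pow_succ, mul_pow, show (8 : ℝ) = 4 * 2 by norm_num, mul_pow]; ring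
      _ ≤ 8 ^ m * (8 * Δ) ^ m := by
          gcongr
          calc (4 : ℝ) ≤ 8 ^ 1 := by norm_num
            _ ≤ 8 ^ m := pow_le_pow_right₀ (by norm_num) (by omega)
      _ = (64 * Δ) ^ m := by rw [← mul_pow]; ring_nf
      _ ≤ (r * (m / 3)) ^ m := pow_le_pow_left₀ (by positivity) (by linarith) m
      _ = r ^ m * (m / 3) ^ m := mul_pow _ _ _
      _ ≤ r ^ m * m.factorial := by gcongr
  have := le_of_mul_le_mul_right key (by positivity)
  exact_mod_cast this

theorem stmt6 {V : Type*} [Fintype V] (G : SimpleGraph V) (Δ : ℕ) (hΔ : 2 ^ 64 ≤ Δ)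
    (hdeg : ∀ v, (G.neighborSet v).ncard ≤ Δ) :
    ∃ P : Fin ⌈(400 * Δ : ℝ) / Real.logb 2 Δ⌉₊ → Set V,
      (∀ v, ∃ i, v ∈ P i) ∧ (∀ i j, i ≠ j → Disjoint (P i) (P j)) ∧
      ∀ v i, ((G.neighborSet v ∩ P i).ncard : ℝ) ≤ Real.logb 2 Δ / 2 := by
  classical
  have hΔ' : (2 : ℝ) ^ 64 ≤ Δ := by exact_mod_cast hΔ
  have hΔ0 : (0 : ℝ) < Δ := lt_of_lt_of_le (by positivity) hΔ'
  have hpow : (Δ : ℝ) = 2 ^ Real.logb 2 Δ :=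
    (Real.rpow_logb (by norm_num) (by norm_num) hΔ0).symm
  have hL : 64 ≤ Real.logb 2 Δ := by
    rw [Real.le_logb_iff_rpow_le (by norm_num) hΔ0]
    exact_mod_cast hΔ
  have hrle := Nat.le_ceil ((400 * Δ : ℝ) / Real.logb 2 Δ)
  have hrpos : 0 < ⌈(400 * Δ : ℝ) / Real.logb 2 Δ⌉₊ :=
    Nat.ceil_pos.2 (div_pos (by positivity) (by linarith))
  generalize Real.logb 2 Δ = L at *
  generalize ⌈(400 * Δ : ℝ) / L⌉₊ = r at *
  obtain ⟨m, hm⟩ : ∃ m, m = ⌊L / 2⌋₊ := ⟨_, rfl⟩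
  have hm1 : 1 ≤ m := by rw [hm]; exact Nat.le_floor (by push_cast; linarith)
  have hN : ∀ v, (G.neighborFinset v).card ≤ Δ := fun v => by
    have := hdeg v
    rwa [← SimpleGraph.coe_neighborFinset, Set.ncard_coe_finset] at this
  let E : Finset (Finset V) :=
    Finset.univ.biUnion fun v => (G.neighborFinset v).powersetCard (m + 1)
  have hd : ∀ u, (E.filter (u ∈ ·)).card ≤ Δ * Δ.choose m := by
    intro u
    have hsub : E.filter (u ∈ ·) ⊆ (G.neighborFinset u).biUnion fun v =>
        ((G.neighborFinset v).powersetCard (m + 1)).filter (u ∈ ·) := by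
      intro S hS
      obtain ⟨hSE, huS⟩ := Finset.mem_filter.1 hS
      obtain ⟨v, -, hv⟩ := Finset.mem_biUnion.1 hSE
      have huv := (Finset.mem_powersetCard.1 hv).1 huS
      refine Finset.mem_biUnion.2 ⟨v, ?_, Finset.mem_filter.2 ⟨hv, huS⟩⟩
      rw [SimpleGraph.mem_neighborFinset] at huv ⊢
      exact huv.symm
    calc (E.filter (u ∈ ·)).card ≤ _ := Finset.card_le_card hsub
      _ ≤ (G.neighborFinset u).card * Δ.choose m :=
          Finset.card_biUnion_le_card_mul _ _ _ fun v _ =>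
            (card_powersetCard_filter_mem_le _ u m).trans (Nat.choose_le_choose m (hN v))
      _ ≤ Δ * Δ.choose m := by gcongr; exact hN u
  obtain ⟨f, hf⟩ := exists_proper r m (Δ * Δ.choose m) hm1 hrpos E
    (by
      intro S hS
      obtain ⟨v, -, hv⟩ := Finset.mem_biUnion.1 hS
      exact (Finset.mem_powersetCard.1 hv).2)
    hd (numeric Δ r m L hL hpow hm hrle)
  refine ⟨fun i => {v | f v = i}, fun v => ⟨f v, rfl⟩, ?_, ?_⟩
  · intro i j hij
    exact Set.disjoint_left.2 fun v (hi : f v = i) (hj : f v = j) => hij (hi.symm.trans hj)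
  · intro v i
    have hcoe : G.neighborSet v ∩ {v | f v = i} =
        ((G.neighborFinset v).filter (f · = i) : Finset V) := by
      ext x; simp
    rw [hcoe, Set.ncard_coe_finset]
    by_contra! hlt
    have hcard : m + 1 ≤ ((G.neighborFinset v).filter (f · = i)).card := by
      rw [hm]; exact (Nat.floor_lt (by linarith)).2 hlt
    obtain ⟨S, hS, hSc⟩ := Finset.exists_subset_card_eq hcard
    refine hf S (Finset.mem_biUnion.2 ⟨v, Finset.mem_univ v, Finset.mem_powersetCard.2
      ⟨hS.trans (Finset.filter_subset _ _), hSc⟩⟩) ?_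
    intro x hx y hy
    rw [(Finset.mem_filter.1 (hS hx)).2, (Finset.mem_filter.1 (hS hy)).2]
end

section
/- Let f(d) denote the maximum separation dimension over all graphs with maximum degree at most d. Then for every d ≥ 2^64, f(d) ≤ 2^9 · (d / log₂ d) · f(ceil(log₂ d)). -/
/-- `maxSdim d` : the maximum separation dimension over finite graphs with
maximum degree at most `d`. -/
noncomputable def maxSdim (d : ℕ) : ℕ :=
  sSup {k | ∃ (m : ℕ) (G : SimpleGraph (Fin m)),
    (∀ v, (G.neighborSet v).ncard ≤ d) ∧ sdim G = k}

/-! ### Colourings with few neighbours of each colour -/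

section Coloring

open Finset

variable {V κ : Type*} [Fintype V] [DecidableEq V] [Fintype κ] [DecidableEq κ]

/-- The colourings of `V` for which every vertex `v` has at most `t` neighbours of each colour
inside `S`; here `N v` is the set of neighbours of `v`. -/
def goodCol (κ : Type*) [Fintype κ] [DecidableEq κ] (N : V → Finset V) (t : ℕ) (S : Finset V) :
    Finset (V → κ) :=
  univ.filter fun c => ∀ v i, ((N v ∩ S).filter fun u => c u = i).card ≤ t

/-- Recolouring `T` arbitrarily: prescribing the colour of the points of `T` as that of `x ∉ T`
costs a factor `|κ| ^ |T|`. -/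
lemma bad_card_le (N : V → Finset V) (t : ℕ) (S T : Finset V) (x : V) (hx : x ∉ T) :
    ((goodCol κ N t S).filter fun c => ∀ u ∈ T, c u = c x).card * Fintype.card κ ^ T.card
      ≤ (goodCol κ N t (S \ T)).card := by
  classical
  have h : Fintype.card κ ^ T.card = (univ : Finset (T → κ)).card := by simp
  rw [h, ← card_product]
  refine card_le_card_of_injOn
    (fun p u => if hu : u ∈ T then p.2 ⟨u, hu⟩ else p.1 u) ?_ ?_
  · rintro ⟨c, g⟩ hp
    simp only [coe_product, Set.mem_prod, mem_coe, mem_filter, goodCol, mem_univ, true_and] at hp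
    simp only [mem_coe, goodCol, mem_filter, mem_univ, true_and]
    intro v i
    refine le_trans (card_le_card ?_) (hp.1.1 v i)
    intro u hu
    simp only [mem_filter, mem_inter, mem_sdiff] at hu ⊢
    obtain ⟨⟨h1, h2, h3⟩, h4⟩ := hu
    simp only [h3, dite_false] at h4
    exact ⟨⟨h1, h2⟩, h4⟩
  · rintro ⟨c, g⟩ hp ⟨c', g'⟩ hp' heq
    simp only [coe_product, Set.mem_prod, mem_coe, mem_filter] at hp hp'
    have heq' := fun u => congrFun heq u
    simp only at heq'
    have hxx : c x = c' x := by simpa [hx] using heq' x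
    refine Prod.ext ?_ ?_
    · funext u
      by_cases hu : u ∈ T
      · exact (hp.1.2 u hu).trans (hxx.trans (hp'.1.2 u hu).symm)
      · simpa [hu] using heq' u
    · funext u
      have := heq' u.1
      simpa [u.2] using this

lemma goodCol_union_le (N : V → Finset V) (t : ℕ) (A : Finset V) (T : Finset V)
    (h : ∀ S x, S ⊂ A ∪ T → (goodCol κ N t S).card ≤ 2 * (goodCol κ N t (insert x S)).card)
    (hdis : Disjoint A T) :
    (goodCol κ N t A).card ≤ 2 ^ T.card * (goodCol κ N t (A ∪ T)).card := by
  induction T using Finset.induction_on with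
  | empty => simp
  | insert x T hx ih =>
    rw [disjoint_insert_right] at hdis
    have hss : A ∪ T ⊂ A ∪ insert x T := by
      rw [union_insert]
      exact ssubset_insert (by simp [hx, hdis.1])
    have h1 := ih (fun S y hS => h S y (hS.trans hss)) hdis.2
    have h2 := h (A ∪ T) x hss
    rw [card_insert_of_notMem hx, union_insert, pow_succ]
    calc _ ≤ _ := h1
      _ ≤ _ := Nat.mul_le_mul_left _ h2
      _ = _ := by ring

lemma goodCol_step (N : V → Finset V) (hsym : ∀ u v, u ∈ N v → v ∈ N u) (d t : ℕ)
    (hN : ∀ v, (N v).card ≤ d) (hκ : 0 < Fintype.card κ)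
    (hbig : 2 * (d * d.choose t) * 2 ^ t ≤ Fintype.card κ ^ t) (S : Finset V) :
    ∀ x, (goodCol κ N t S).card ≤ 2 * (goodCol κ N t (insert x S)).card := by
  classical
  induction S using Finset.strongInduction with
  | H S ih =>
  intro x
  by_cases hxS : x ∈ S
  · rw [insert_eq_of_mem hxS]; omega
  set B : V → Finset V → Finset (V → κ) :=
    fun _ T => (goodCol κ N t S).filter fun c => ∀ u ∈ T, c u = c x with hB
  set P : Finset ((_ : V) × Finset V) :=
    (N x).sigma fun v => (N v ∩ S).powersetCard t with hP
  -- A colouring lost when `x` is added has a witness `(v, T)`.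
  have hcover : goodCol κ N t S ⊆
      goodCol κ N t (insert x S) ∪ P.biUnion fun p => B p.1 p.2 := by
    intro c hc
    rw [mem_union]
    by_contra! hcon
    obtain ⟨hc1, hc2⟩ := hcon
    apply hc1
    simp only [goodCol, mem_filter, mem_univ, true_and] at hc ⊢
    intro v i
    by_contra! hlt
    apply hc2
    have hle := hc v i
    have hvx : x ∈ N v ∧ c x = i := by
      by_contra hno
      refine absurd hle (not_le.mpr (lt_of_lt_of_le hlt (card_le_card ?_)))
      intro u hu
      simp only [mem_filter, mem_inter, mem_insert] at hu ⊢
      obtain ⟨⟨h1, h2⟩, h3⟩ := hu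
      rcases h2 with rfl | h2
      · exact absurd ⟨h1, h3⟩ hno
      · exact ⟨⟨h1, h2⟩, h3⟩
    have hcard : t ≤ ((N v ∩ S).filter fun u => c u = i).card := by
      have : ((N v ∩ insert x S).filter fun u => c u = i) ⊆
          insert x ((N v ∩ S).filter fun u => c u = i) := by
        intro u hu
        simp only [mem_filter, mem_inter, mem_insert] at hu ⊢
        tauto
      have := card_le_card this
      have := card_insert_le x ((N v ∩ S).filter fun u => c u = i)
      omega
    obtain ⟨T, hT, hTc⟩ := exists_subset_card_eq hcard
    rw [mem_biUnion]
    refine ⟨⟨v, T⟩, ?_, ?_⟩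
    · simp only [hP, mem_sigma, mem_powersetCard]
      exact ⟨hsym _ _ hvx.1, hT.trans (filter_subset _ _), hTc⟩
    · simp only [hB, mem_filter, goodCol, mem_univ, true_and]
      refine ⟨hc, fun u hu => ?_⟩
      rw [hvx.2]
      exact (mem_filter.mp (hT hu)).2
  have hbad : ∀ p ∈ P, (B p.1 p.2).card * Fintype.card κ ^ t ≤
      2 ^ t * (goodCol κ N t S).card := by
    rintro ⟨v, T⟩ hp
    simp only [hP, mem_sigma, mem_powersetCard] at hp
    obtain ⟨-, hTS, hTc⟩ := hp
    have hTS' : T ⊆ S := hTS.trans inter_subset_right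
    have h1 := bad_card_le (κ := κ) N t S T x (fun h => hxS (hTS' h))
    have h2 := goodCol_union_le (κ := κ) N t (S \ T) T
      (fun S' y hS' => ih S' (by rwa [sdiff_union_of_subset hTS'] at hS') y) sdiff_disjoint
    rw [sdiff_union_of_subset hTS'] at h2
    rw [hTc] at h1 h2
    exact h1.trans h2
  have hPc : P.card ≤ d * d.choose t := by
    rw [hP, card_sigma]
    calc _ ≤ ∑ v ∈ N x, d.choose t := by
          refine sum_le_sum fun v _ => ?_
          rw [card_powersetCard]
          exact Nat.choose_le_choose _ ((card_le_card inter_subset_left).trans (hN v))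
      _ = (N x).card * d.choose t := by simp
      _ ≤ _ := Nat.mul_le_mul_right _ (hN x)
  have hb1 : (P.biUnion fun p => B p.1 p.2).card * Fintype.card κ ^ t ≤
      d * d.choose t * (2 ^ t * (goodCol κ N t S).card) := by
    calc _ ≤ (∑ p ∈ P, (B p.1 p.2).card) * Fintype.card κ ^ t :=
          Nat.mul_le_mul_right _ card_biUnion_le
      _ = ∑ p ∈ P, (B p.1 p.2).card * Fintype.card κ ^ t := by rw [sum_mul]
      _ ≤ ∑ p ∈ P, 2 ^ t * (goodCol κ N t S).card := sum_le_sum hbad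
      _ = P.card * (2 ^ t * (goodCol κ N t S).card) := by simp
      _ ≤ _ := Nat.mul_le_mul_right _ hPc
  have hb2 : 2 * (P.biUnion fun p => B p.1 p.2).card ≤ (goodCol κ N t S).card := by
    refine Nat.le_of_mul_le_mul_right ?_ (pow_pos hκ t)
    calc _ = 2 * ((P.biUnion fun p => B p.1 p.2).card * Fintype.card κ ^ t) := by ring
      _ ≤ 2 * (d * d.choose t * (2 ^ t * (goodCol κ N t S).card)) := Nat.mul_le_mul_left _ hb1
      _ = (goodCol κ N t S).card * (2 * (d * d.choose t) * 2 ^ t) := by ring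
      _ ≤ _ := Nat.mul_le_mul_left _ hbig
  have h3 := (card_le_card hcover).trans (card_union_le _ _)
  omega

lemma exists_coloring (N : V → Finset V) (hsym : ∀ u v, u ∈ N v → v ∈ N u) (d t : ℕ)
    (hN : ∀ v, (N v).card ≤ d) (hκ : 0 < Fintype.card κ)
    (hbig : 2 * (d * d.choose t) * 2 ^ t ≤ Fintype.card κ ^ t) :
    ∃ c : V → κ, ∀ v i, ((N v).filter fun u => c u = i).card ≤ t := by
  classical
  have h := goodCol_union_le (κ := κ) N t ∅ univ
    (fun S x _ => goodCol_step N hsym d t hN hκ hbig S x) (disjoint_empty_left _)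
  have h0 : 0 < (goodCol κ N t ∅).card := by
    have : Nonempty κ := Fintype.card_pos_iff.mp hκ
    rw [card_pos]
    exact ⟨fun _ => Classical.arbitrary κ, by simp [goodCol]⟩
  have h1 : 0 < (goodCol κ N t (∅ ∪ univ)).card :=
    Nat.pos_of_mul_pos_left (lt_of_lt_of_le h0 h)
  obtain ⟨c, hc⟩ := card_pos.mp h1
  refine ⟨c, ?_⟩
  simpa [goodCol] using hc

end Coloring

/-! ### Separation dimension through indexed families -/

/-- An indexed form of `PairwiseSuitable`. -/
def SuitableFam {V ι : Type*} (G : SimpleGraph V) (σ : ι → V → ℕ) : Prop :=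
  (∀ i, Function.Injective (σ i)) ∧
  ∀ e ∈ G.edgeSet, ∀ f ∈ G.edgeSet, (∀ v, v ∈ e → v ∉ f) → ∃ i, Separates (σ i) e f

lemma sdim_le_card {V ι : Type*} [Fintype ι] (G : SimpleGraph V) (σ : ι → V → ℕ)
    (h : SuitableFam G σ) : sdim G ≤ Fintype.card ι := by
  classical
  have h1 : sdim G ≤ (Finset.univ.image σ).card := by
    refine Nat.sInf_le ⟨Finset.univ.image σ, ⟨?_, ?_⟩, rfl⟩
    · intro s hs
      obtain ⟨i, -, rfl⟩ := Finset.mem_image.mp hs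
      exact h.1 i
    · intro e he f hf hd
      obtain ⟨i, hi⟩ := h.2 e he f hf hd
      exact ⟨σ i, Finset.mem_image_of_mem _ (Finset.mem_univ _), hi⟩
  exact h1.trans (Finset.card_image_le.trans (by simp))

/-- On a finite vertex set the infimum defining `sdim` is over a nonempty set: two given disjoint
edges `e`, `f` are separated by an order that starts with `e` and continues with `f`. -/
lemma exists_suitable {m : ℕ} (G : SimpleGraph (Fin m)) :
    ∃ F : Finset (Fin m → ℕ), PairwiseSuitable G F ∧ F.card = sdim G := by
  classical
  refine Nat.sInf_mem (s := {k | ∃ F : Finset (Fin m → ℕ), PairwiseSuitable G F ∧ F.card = k}) ?_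
  let τ : Sym2 (Fin m) × Sym2 (Fin m) → Fin m → ℕ := fun p v =>
    if v ∈ p.1 then v.1 else if v ∈ p.2 then m + v.1 else 2 * m + v.1
  refine ⟨_, Finset.univ.image τ, ⟨?_, ?_⟩, rfl⟩
  · intro s hs
    obtain ⟨p, -, rfl⟩ := Finset.mem_image.mp hs
    intro u v huv
    have hu := u.2
    have hv := v.2
    simp only [τ] at huv
    apply Fin.ext
    split_ifs at huv <;> omega
  · intro e he f hf hd
    refine ⟨τ (e, f), Finset.mem_image_of_mem _ (Finset.mem_univ _), Or.inl ?_⟩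
    intro u hu w hw
    have h1 : w ∉ e := fun h => hd w h hw
    have := u.2
    simp only [τ, hu, hw, h1, if_true, if_false]
    omega

lemma exists_fam {m K : ℕ} (G : SimpleGraph (Fin m)) (h : sdim G ≤ K) :
    ∃ σ : Fin K → Fin m → ℕ, SuitableFam G σ := by
  classical
  obtain ⟨F, hF, hc⟩ := exists_suitable G
  rcases F.eq_empty_or_nonempty with rfl | ⟨s₀, hs₀⟩
  · refine ⟨fun _ v => v.1, fun _ => Fin.val_injective, ?_⟩
    intro e he f hf hd
    obtain ⟨s, hs, -⟩ := hF.2 e he f hf hd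
    simp at hs
  · have hle : F.card ≤ K := hc ▸ h
    let g := F.equivFin
    refine ⟨fun i => if hi : i.1 < F.card then (g.symm ⟨i.1, hi⟩).1 else s₀, ?_, ?_⟩
    · intro i
      dsimp only
      split_ifs
      · exact hF.1 _ (g.symm _).2
      · exact hF.1 _ hs₀
    · intro e he f hf hd
      obtain ⟨s, hs, hsep⟩ := hF.2 e he f hf hd
      refine ⟨⟨(g ⟨s, hs⟩).1, (g ⟨s, hs⟩).2.trans_le hle⟩, ?_⟩
      simpa using hsep

lemma sdim_top_four_pos : 0 < sdim (⊤ : SimpleGraph (Fin 4)) := by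
  obtain ⟨F, hF, hc⟩ := exists_suitable (⊤ : SimpleGraph (Fin 4))
  rw [← hc, Finset.card_pos]
  obtain ⟨s, hs, -⟩ := hF.2 s(0, 1) (by simp) s(2, 3) (by simp) (by
    intro v
    simp only [Sym2.mem_iff]
    rintro (rfl | rfl) <;> decide)
  exact ⟨s, hs⟩

/-! ### Orders separating edges that meet at least three colours -/

/-- The colour ranks obtained from a code `E` of the colours by `w` bits: look at the four bits
listed by `p.1` and apply the function `p.2` to them. -/
def rankFn {κ : Type*} {w : ℕ} (E : κ → Fin w → Bool)
    (p : (Fin 4 → Fin w) × ((Fin 4 → Bool) → Fin 3)) (i : κ) : ℕ :=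
  (p.2 fun k => E i (p.1 k)).1

lemma exists_rank_pairs {κ : Type*} {w : ℕ} (E : κ → Fin w → Bool) (hE : Function.Injective E)
    (a b a' b' : κ) (h1 : a ≠ a') (h2 : a ≠ b') (h3 : b ≠ a') (h4 : b ≠ b') :
    ∃ p, rankFn E p a = 0 ∧ rankFn E p b = 0 ∧ rankFn E p a' = 1 ∧ rankFn E p b' = 1 := by
  classical
  obtain ⟨k1, h1⟩ := Function.ne_iff.mp (hE.ne h1)
  obtain ⟨k2, h2⟩ := Function.ne_iff.mp (hE.ne h2)
  obtain ⟨k3, h3⟩ := Function.ne_iff.mp (hE.ne h3)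
  obtain ⟨k4, h4⟩ := Function.ne_iff.mp (hE.ne h4)
  let q : Fin 4 → Fin w := ![k1, k2, k3, k4]
  let x : κ → Fin 4 → Bool := fun i k => E i (q k)
  have e1 : x a' ≠ x a := fun h => h1 (congrFun h 0).symm
  have e2 : x b' ≠ x a := fun h => h2 (congrFun h 1).symm
  have e3 : x a' ≠ x b := fun h => h3 (congrFun h 2).symm
  have e4 : x b' ≠ x b := fun h => h4 (congrFun h 3).symm
  refine ⟨(q, fun y => if y = x a ∨ y = x b then 0 else 1), ?_, ?_, ?_, ?_⟩
  · change ((if x a = x a ∨ x a = x b then 0 else 1 : Fin 3) : ℕ) = 0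
    simp
  · change ((if x b = x a ∨ x b = x b then 0 else 1 : Fin 3) : ℕ) = 0
    simp
  · change ((if x a' = x a ∨ x a' = x b then 0 else 1 : Fin 3) : ℕ) = 1
    simp [e1, e3]
  · change ((if x b' = x a ∨ x b' = x b then 0 else 1 : Fin 3) : ℕ) = 1
    simp [e2, e4]

lemma exists_rank_triple {κ : Type*} {w : ℕ} (E : κ → Fin w → Bool) (hE : Function.Injective E)
    (a b c : κ) (h1 : a ≠ b) (h2 : b ≠ c) (h3 : a ≠ c) :
    ∃ p, rankFn E p a = 0 ∧ rankFn E p b = 1 ∧ rankFn E p c = 2 := by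
  classical
  obtain ⟨k1, h1⟩ := Function.ne_iff.mp (hE.ne h1)
  obtain ⟨k2, h2⟩ := Function.ne_iff.mp (hE.ne h2)
  obtain ⟨k3, h3⟩ := Function.ne_iff.mp (hE.ne h3)
  -- Three bits are enough here; one is repeated.
  let q : Fin 4 → Fin w := ![k1, k2, k3, k3]
  let x : κ → Fin 4 → Bool := fun i k => E i (q k)
  have e1 : x b ≠ x a := fun h => h1 (congrFun h 0).symm
  have e2 : x c ≠ x b := fun h => h2 (congrFun h 1).symm
  have e3 : x c ≠ x a := fun h => h3 (congrFun h 2).symm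
  refine ⟨(q, fun y => if y = x a then 0 else if y = x b then 1 else 2), ?_, ?_, ?_⟩
  · change ((if x a = x a then 0 else if x a = x b then 1 else 2 : Fin 3) : ℕ) = 0
    simp
  · change ((if x b = x a then 0 else if x b = x b then 1 else 2 : Fin 3) : ℕ) = 1
    simp [e1]
  · change ((if x c = x a then 0 else if x c = x b then 1 else 2 : Fin 3) : ℕ) = 2
    simp [e2, e3]

/-- The order on `Fin m` by the rank of the colour first, then by the natural order. -/
def lexOrder {κ : Type*} {m w : ℕ} (E : κ → Fin w → Bool) (c : Fin m → κ)
    (p : (Fin 4 → Fin w) × ((Fin 4 → Bool) → Fin 3)) (v : Fin m) : ℕ :=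
  rankFn E p (c v) * m + v.1

lemma lexOrder_injective {κ : Type*} {m w : ℕ} (E : κ → Fin w → Bool) (c : Fin m → κ)
    (p : (Fin 4 → Fin w) × ((Fin 4 → Bool) → Fin 3)) : Function.Injective (lexOrder E c p) := by
  intro u v h
  have h' := congrArg (· % m) h
  simp only [lexOrder, Nat.mul_add_mod_self_right, Nat.mod_eq_of_lt u.2,
    Nat.mod_eq_of_lt v.2] at h'
  exact Fin.ext h'

/-- Separation of two edges `uv`, `xy` whose colours in `u` and `x` agree and which meet
three colours: the common colour is put in the middle. -/
lemma lexOrder_shared {κ : Type*} {m w : ℕ} (E : κ → Fin w → Bool) (hE : Function.Injective E)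
    (c : Fin m → κ) (u v x y : Fin m) (hux : u ≠ x) (h : c u = c x) (h1 : c v ≠ c u)
    (h2 : c y ≠ c u) (h3 : c v ≠ c y) : ∃ p, Separates (lexOrder E c p) s(u, v) s(x, y) := by
  have hu := u.2
  have hv := v.2
  have hx := x.2
  have hy := y.2
  have hne : u.1 ≠ x.1 := fun e => hux (Fin.ext e)
  rcases lt_or_gt_of_ne hne with hlt | hlt
  · obtain ⟨p, q1, q2, q3⟩ := exists_rank_triple E hE (c v) (c u) (c y) h1 h2.symm h3
    refine ⟨p, Or.inl ?_⟩
    simp only [Sym2.mem_iff]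
    rintro a (rfl | rfl) b (rfl | rfl) <;>
      simp only [lexOrder, ← h, q1, q2, q3] <;> omega
  · obtain ⟨p, q1, q2, q3⟩ := exists_rank_triple E hE (c y) (c u) (c v) h2 h1.symm h3.symm
    refine ⟨p, Or.inr ?_⟩
    simp only [Sym2.mem_iff]
    rintro a (rfl | rfl) b (rfl | rfl) <;>
      simp only [lexOrder, ← h, q1, q2, q3] <;> omega

lemma lexOrder_disjoint {κ : Type*} {m w : ℕ} (E : κ → Fin w → Bool) (hE : Function.Injective E)
    (c : Fin m → κ) (u v x y : Fin m) (h1 : c u ≠ c x) (h2 : c u ≠ c y)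
    (h3 : c v ≠ c x) (h4 : c v ≠ c y) : ∃ p, Separates (lexOrder E c p) s(u, v) s(x, y) := by
  have hu := u.2
  have hv := v.2
  obtain ⟨p, q1, q2, q3, q4⟩ := exists_rank_pairs E hE (c u) (c v) (c x) (c y) h1 h2 h3 h4
  refine ⟨p, Or.inl ?_⟩
  simp only [Sym2.mem_iff]
  rintro a (rfl | rfl) b (rfl | rfl) <;>
    simp only [lexOrder, q1, q2, q3, q4] <;> omega

/-! ### Combining the orders -/

/-- The edges of `G` that are monochromatic or whose two colours have sum `s`. -/
def sumGraph {V κ : Type*} [AddCommGroup κ] (G : SimpleGraph V) (c : V → κ) (s : κ) :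
    SimpleGraph V where
  Adj u v := G.Adj u v ∧ (c u = c v ∨ c u + c v = s)
  symm := ⟨fun u v h => ⟨h.1.symm, h.2.imp Eq.symm fun e => by rw [add_comm]; exact e⟩⟩
  loopless := ⟨fun v h => G.loopless.irrefl v h.1⟩

lemma sumGraph_degree {V κ : Type*} [Finite V] [AddCommGroup κ] (G : SimpleGraph V) (c : V → κ)
    (s : κ) (t : ℕ) (hc : ∀ v i, ({u | G.Adj v u ∧ c u = i} : Set V).ncard ≤ t) (v : V) :
    ((sumGraph G c s).neighborSet v).ncard ≤ 2 * t := by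
  have hsub : (sumGraph G c s).neighborSet v ⊆
      {u | G.Adj v u ∧ c u = c v} ∪ {u | G.Adj v u ∧ c u = s - c v} := by
    rintro u ⟨h1, h2 | h2⟩
    · exact Or.inl ⟨h1, h2.symm⟩
    · exact Or.inr ⟨h1, by rw [← h2]; abel⟩
  have h1 := Set.ncard_le_ncard hsub (Set.toFinite _)
  have h2 := Set.ncard_union_le {u | G.Adj v u ∧ c u = c v} {u | G.Adj v u ∧ c u = s - c v}
  have h3 := hc v (c v)
  have h4 := hc v (s - c v)
  omega

/-- Two disjoint edges that meet at most two colours lie in a common `sumGraph`; all other pairs are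
separated by some `lexOrder`. -/
lemma edge_cases {m w : ℕ} {κ : Type*} [AddCommGroup κ] (G : SimpleGraph (Fin m)) (c : Fin m → κ)
    (E : κ → Fin w → Bool) (hE : Function.Injective E) (e f : Sym2 (Fin m))
    (he : e ∈ G.edgeSet) (hf : f ∈ G.edgeSet) (hd : ∀ v, v ∈ e → v ∉ f) :
    (∃ s, e ∈ (sumGraph G c s).edgeSet ∧ f ∈ (sumGraph G c s).edgeSet) ∨
      ∃ p, Separates (lexOrder E c p) e f := by
  induction e using Sym2.ind with | _ u v => ?_
  induction f using Sym2.ind with | _ x y => ?_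
  rw [SimpleGraph.mem_edgeSet] at he hf
  simp only [SimpleGraph.mem_edgeSet, sumGraph, he, hf, true_and]
  simp only [Sym2.mem_iff] at hd
  have hux : u ≠ x := fun h => hd u (Or.inl rfl) (Or.inl h)
  have huy : u ≠ y := fun h => hd u (Or.inl rfl) (Or.inr h)
  have hvx : v ≠ x := fun h => hd v (Or.inr rfl) (Or.inl h)
  have hvy : v ≠ y := fun h => hd v (Or.inr rfl) (Or.inr h)
  by_cases huv : c u = c v
  · by_cases hxy : c x = c y
    · exact Or.inl ⟨0, Or.inl huv, Or.inl hxy⟩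
    · by_cases h : c u = c x ∨ c u = c y
      · exact Or.inl ⟨c x + c y, Or.inl huv, Or.inr rfl⟩
      · push Not at h
        exact Or.inr (lexOrder_disjoint E hE c u v x y h.1 h.2 (huv ▸ h.1) (huv ▸ h.2))
  · by_cases hxy : c x = c y
    · exact Or.inl ⟨c u + c v, Or.inr rfl, Or.inl hxy⟩
    · by_cases h1 : c u = c x
      · by_cases h2 : c v = c y
        · exact Or.inl ⟨c u + c v, Or.inr rfl, Or.inr (by rw [h1, h2])⟩
        · exact Or.inr (lexOrder_shared E hE c u v x y hux h1 (Ne.symm huv)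
            (fun h => hxy (h1.symm.trans h.symm)) h2)
      by_cases h2 : c u = c y
      · by_cases h3 : c v = c x
        · exact Or.inl ⟨c u + c v, Or.inr rfl, Or.inr (by rw [h2, h3, add_comm])⟩
        · rw [Sym2.eq_swap (a := x)]
          exact Or.inr (lexOrder_shared E hE c u v y x huy h2 (Ne.symm huv) (Ne.symm h1) h3)
      by_cases h3 : c v = c x
      · rw [Sym2.eq_swap (a := u)]
        exact Or.inr (lexOrder_shared E hE c v u x y hvx h3 huv
          (fun h => hxy (h3.symm.trans h.symm)) h2)
      by_cases h4 : c v = c y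
      · rw [Sym2.eq_swap (a := u), Sym2.eq_swap (a := x)]
        exact Or.inr (lexOrder_shared E hE c v u y x hvy h4 huv (Ne.symm h3) h1)
      exact Or.inr (lexOrder_disjoint E hE c u v x y h1 h2 h3 h4)

lemma sdim_le_of_coloring {m w r t K : ℕ} [NeZero r] (G : SimpleGraph (Fin m))
    (c : Fin m → ZMod r) (hc : ∀ v i, ({u | G.Adj v u ∧ c u = i} : Set (Fin m)).ncard ≤ t)
    (hw : r ≤ 2 ^ w)
    (hsd : ∀ H : SimpleGraph (Fin m), (∀ v, (H.neighborSet v).ncard ≤ 2 * t) → sdim H ≤ K) :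
    sdim G ≤ r * K + w ^ 4 * 3 ^ 16 := by
  classical
  obtain ⟨E⟩ : Nonempty (ZMod r ↪ (Fin w → Bool)) :=
    Function.Embedding.nonempty_of_card_le (by simpa [ZMod.card] using hw)
  choose σ hσ using fun s => exists_fam (sumGraph G c s) (hsd _ (sumGraph_degree G c s t hc))
  let τ : (ZMod r × Fin K) ⊕ ((Fin 4 → Fin w) × ((Fin 4 → Bool) → Fin 3)) → Fin m → ℕ :=
    Sum.elim (fun q => σ q.1 q.2) (lexOrder E c)
  have hτ : SuitableFam G τ := by
    constructor
    · rintro (q | p)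
      · exact (hσ q.1).1 q.2
      · exact lexOrder_injective E c p
    · intro e he f hf hd
      rcases edge_cases G c E E.injective e f he hf hd with ⟨s, h1, h2⟩ | ⟨p, hp⟩
      · obtain ⟨i, hi⟩ := (hσ s).2 e h1 f h2 hd
        exact ⟨Sum.inl (s, i), hi⟩
      · exact ⟨Sum.inr p, hp⟩
  have := sdim_le_card G τ hτ
  simpa [ZMod.card] using this

/-! ### Estimates -/

lemma succ_pow_le_factorial (t : ℕ) : (t + 1) ^ t ≤ 4 ^ t * t.factorial := by
  induction t with
  | zero => simp
  | succ n ih =>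
    -- The ratio of consecutive values of `(n + 1) ^ n / n!` is `(1 + 1 / (n + 1)) ^ (n + 1) < e`.
    have key : ((n : ℝ) + 2) ^ (n + 1) ≤ 4 * ((n : ℝ) + 1) ^ (n + 1) := by
      have h0 : (0 : ℝ) < n + 1 := by positivity
      have h1 : ((n : ℝ) + 2) / (n + 1) ≤ Real.exp (1 / (n + 1)) := by
        have := Real.add_one_le_exp (1 / ((n : ℝ) + 1))
        refine le_trans (le_of_eq ?_) this
        field_simp
        ring
      have h2 : (((n : ℝ) + 2) / (n + 1)) ^ (n + 1) ≤ 4 := by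
        calc _ ≤ (Real.exp (1 / ((n : ℝ) + 1))) ^ (n + 1) := by gcongr
          _ = Real.exp 1 := by
            rw [← Real.exp_nat_mul]
            congr 1
            push_cast
            field_simp
          _ ≤ 4 := by linarith [Real.exp_one_lt_d9]
      rwa [div_pow, div_le_iff₀ (by positivity)] at h2
    have key' : (n + 2) ^ (n + 1) ≤ 4 * (n + 1) ^ (n + 1) := by exact_mod_cast key
    calc (n + 1 + 1) ^ (n + 1) ≤ 4 * (n + 1) ^ (n + 1) := key'
      _ = 4 * (n + 1) * (n + 1) ^ n := by ring
      _ ≤ 4 * (n + 1) * (4 ^ n * n.factorial) := Nat.mul_le_mul_left _ ih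
      _ = 4 ^ (n + 1) * (n + 1).factorial := by rw [Nat.factorial_succ]; ring

lemma counting_bound (d t r : ℕ) (ht : 32 ≤ t) (hd : d ≤ 4 ^ (t + 1))
    (hr : 200 * d ≤ r * (t + 1)) : 2 * (d * d.choose t) * 2 ^ t ≤ r ^ t := by
  have hpos : 0 < 4 ^ t * t.factorial := by positivity
  refine Nat.le_of_mul_le_mul_right ?_ hpos
  have h1 : d.choose t * t.factorial ≤ d ^ t := by
    rw [mul_comm, ← Nat.descFactorial_eq_factorial_mul_choose]
    exact Nat.descFactorial_le_pow d t
  have h2 : 8 * 32 ^ t ≤ 200 ^ t := by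
    have : 8 ≤ 6 ^ t := (by norm_num : 8 ≤ 6 ^ 2).trans (Nat.pow_le_pow_right (by norm_num) (by omega))
    calc 8 * 32 ^ t ≤ 6 ^ t * 32 ^ t := Nat.mul_le_mul_right _ this
      _ = 192 ^ t := by rw [← mul_pow]; norm_num
      _ ≤ 200 ^ t := Nat.pow_le_pow_left (by norm_num) t
  calc 2 * (d * d.choose t) * 2 ^ t * (4 ^ t * t.factorial)
      = 2 * d * (2 ^ t * 4 ^ t) * (d.choose t * t.factorial) := by ring
    _ ≤ 2 * 4 ^ (t + 1) * (2 ^ t * 4 ^ t) * d ^ t := by gcongr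
    _ = 8 * (4 ^ t * 2 ^ t * 4 ^ t) * d ^ t := by ring
    _ = 8 * 32 ^ t * d ^ t := by rw [← mul_pow, ← mul_pow]; norm_num
    _ ≤ 200 ^ t * d ^ t := Nat.mul_le_mul_right _ h2
    _ = (200 * d) ^ t := by rw [mul_pow]
    _ ≤ (r * (t + 1)) ^ t := Nat.pow_le_pow_left hr t
    _ = r ^ t * (t + 1) ^ t := by rw [mul_pow]
    _ ≤ _ := Nat.mul_le_mul_left _ (succ_pow_le_factorial t)

lemma remainder_bound (t : ℕ) (ht : 32 ≤ t) :
    (1 + (2 * t + 6) ^ 4 * 3 ^ 16) * (2 * t + 2) ≤ 112 * 4 ^ t := by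
  have key : 3 ^ 17 * (2 * t + 6) ^ 5 ≤ 112 * 4 ^ t := by
    induction t, ht using Nat.le_induction with
    | base => norm_num
    | succ n hn ih =>
      have h : (2 * (n + 1) + 6) ^ 5 ≤ 4 * (2 * n + 6) ^ 5 := by
        have h1 : (35 * (2 * (n + 1) + 6)) ^ 5 ≤ (36 * (2 * n + 6)) ^ 5 :=
          Nat.pow_le_pow_left (by omega) 5
        rw [mul_pow, mul_pow] at h1
        norm_num at h1 ⊢
        omega
      calc _ ≤ 3 ^ 17 * (4 * (2 * n + 6) ^ 5) := Nat.mul_le_mul_left _ h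
        _ = 4 * (3 ^ 17 * (2 * n + 6) ^ 5) := by ring
        _ ≤ 4 * (112 * 4 ^ n) := Nat.mul_le_mul_left _ ih
        _ = _ := by ring
  refine le_trans ?_ key
  have h1 : 1 ≤ (2 * t + 6) ^ 4 := Nat.one_le_pow _ _ (by omega)
  calc _ ≤ (3 * 3 ^ 16 * (2 * t + 6) ^ 4) * (2 * t + 6) := by
        apply Nat.mul_le_mul _ (by omega)
        omega
    _ = _ := by ring

theorem stmt8 (d : ℕ) (hd : 2 ^ 64 ≤ d) :
    (maxSdim d : ℝ) ≤ 2 ^ 9 * ((d : ℝ) / Real.logb 2 d) *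
      maxSdim ⌈Real.logb 2 d⌉₊ := by
  classical
  have hdR : (2 : ℝ) ^ (64 : ℕ) ≤ d := by exact_mod_cast hd
  have hd0 : (0 : ℝ) < d := lt_of_lt_of_le (by positivity) hdR
  obtain ⟨L, hL⟩ : ∃ L, L = Real.logb 2 d := ⟨_, rfl⟩
  rw [← hL]
  have hL64 : 64 ≤ L := by
    rw [hL, Real.le_logb_iff_rpow_le (by norm_num) hd0]
    exact_mod_cast hdR
  have hdL : (2 : ℝ) ^ L = d := by
    rw [hL]; exact Real.rpow_logb (by norm_num) (by norm_num) hd0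
  -- An unbounded supremum has the junk value `0`.
  by_cases hbdd : BddAbove {k | ∃ (m : ℕ) (G : SimpleGraph (Fin m)),
    (∀ v, (G.neighborSet v).ncard ≤ d) ∧ sdim G = k}
  swap
  · have : maxSdim d = 0 := Nat.sSup_of_not_bddAbove hbdd
    rw [this]
    push_cast
    positivity
  set D := ⌈L⌉₊ with hD
  have hDd : D ≤ d := by
    rw [hD, Nat.ceil_le, hL, Real.logb_le_iff_le_rpow (by norm_num) hd0]
    rw [Real.rpow_natCast]
    exact_mod_cast Nat.lt_two_pow_self.le
  have hsd : ∀ {m : ℕ} (H : SimpleGraph (Fin m)), (∀ v, (H.neighborSet v).ncard ≤ D) →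
      sdim H ≤ maxSdim D := by
    intro m H hH
    refine le_csSup (hbdd.mono ?_) ⟨m, H, hH, rfl⟩
    rintro k ⟨m, G, hG, hk⟩
    exact ⟨m, G, fun v => (hG v).trans hDd, hk⟩
  have hD4 : 4 ≤ D := by
    have : (4 : ℝ) ≤ (D : ℝ) := by linarith [Nat.le_ceil L]
    exact_mod_cast this
  have hK : 0 < maxSdim D := by
    refine sdim_top_four_pos.trans_le (hsd _ fun v => le_trans ?_ hD4)
    refine (Set.ncard_le_ncard (Set.subset_univ _) (Set.toFinite _)).trans ?_
    simp [Set.ncard_univ]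
  set K := maxSdim D
  set t := ⌊L / 2⌋₊ with ht
  have ht1 : (t : ℝ) ≤ L / 2 := Nat.floor_le (by linarith)
  have ht2 : L / 2 < t + 1 := Nat.lt_floor_add_one _
  have ht32 : 32 ≤ t := by
    rw [ht, Nat.le_floor_iff (by linarith)]
    push_cast
    linarith
  have h2tD : 2 * t ≤ D := by
    have : ((2 * t : ℕ) : ℝ) ≤ (D : ℝ) := by push_cast; linarith [Nat.le_ceil L]
    exact_mod_cast this
  have hdup : d ≤ 4 ^ (t + 1) := by
    have : (d : ℝ) ≤ ((4 ^ (t + 1) : ℕ) : ℝ) := by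
      rw [← hdL]
      calc (2 : ℝ) ^ L ≤ 2 ^ (((2 * (t + 1) : ℕ)) : ℝ) :=
            Real.rpow_le_rpow_of_exponent_le (by norm_num) (by push_cast; linarith)
        _ = _ := by rw [Real.rpow_natCast, pow_mul]; norm_num
    exact_mod_cast this
  have hdlow : (4 : ℝ) ^ t ≤ d := by
    rw [← hdL]
    calc (4 : ℝ) ^ t = 2 ^ (((2 * t : ℕ)) : ℝ) := by rw [Real.rpow_natCast, pow_mul]; norm_num
      _ ≤ _ := Real.rpow_le_rpow_of_exponent_le (by norm_num) (by push_cast; linarith)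
  set r := ⌈400 * d / L⌉₊ with hr
  have hLpos : 0 < L := by linarith
  have hr1 : 400 * d / L ≤ r := Nat.le_ceil _
  have hr2 : (r : ℝ) < 400 * d / L + 1 := Nat.ceil_lt_add_one (by positivity)
  have hr0 : 0 < r := Nat.ceil_pos.mpr (by positivity)
  have : NeZero r := ⟨hr0.ne'⟩
  have hrt : 200 * d ≤ r * (t + 1) := by
    have : ((200 * d : ℕ) : ℝ) ≤ ((r * (t + 1) : ℕ) : ℝ) := by
      push_cast
      rw [div_le_iff₀ hLpos] at hr1
      nlinarith [(Nat.cast_nonneg r : (0 : ℝ) ≤ r)]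
    exact_mod_cast this
  have hrw : r ≤ 2 ^ (2 * t + 6) := by
    have h1 : 400 * (d : ℝ) / L ≤ 7 * d := by
      rw [div_le_iff₀ hLpos]
      nlinarith
    have h2 : (r : ℝ) ≤ ((8 * d : ℕ) : ℝ) := by
      push_cast
      have : (1 : ℝ) ≤ d := le_trans (by norm_num) hdR
      linarith
    have h3 : r ≤ 8 * d := by exact_mod_cast h2
    have h4 : 2 ^ (2 * t + 6) = 16 * 4 ^ (t + 1) := by
      rw [pow_add, pow_mul, pow_succ]; norm_num; ring
    omega
  have hnat : maxSdim d ≤ r * K + (2 * t + 6) ^ 4 * 3 ^ 16 := by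
    refine csSup_le' ?_
    rintro k ⟨m, G, hG, rfl⟩
    obtain ⟨c, hc⟩ := exists_coloring (κ := ZMod r) (fun v => G.neighborFinset v)
      (fun u v h => by simpa [SimpleGraph.adj_comm] using h) d t
      (fun v => by
        have := hG v
        rwa [Set.ncard_eq_toFinset_card'] at this)
      (by rw [ZMod.card]; exact hr0)
      (by rw [ZMod.card]; exact counting_bound d t r ht32 hdup hrt)
    refine sdim_le_of_coloring (t := t) G c (fun v i => ?_) hrw
      (fun H hH => hsd H fun v => (hH v).trans h2tD)
    refine le_trans (le_of_eq ?_) (hc v i)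
    rw [← Set.ncard_coe_finset]
    congr 1
    ext u
    simp
  have hnatR : (maxSdim d : ℝ) ≤ r * K + (2 * t + 6) ^ 4 * 3 ^ 16 := by exact_mod_cast hnat
  have hrem : (1 + (2 * (t : ℝ) + 6) ^ 4 * 3 ^ 16) * (2 * t + 2) ≤ 112 * 4 ^ t := by
    exact_mod_cast remainder_bound t ht32
  have hK1 : (1 : ℝ) ≤ K := by exact_mod_cast hK
  have hrem2 : 1 + (2 * (t : ℝ) + 6) ^ 4 * 3 ^ 16 ≤ 112 * (d / L) := by
    rw [← mul_div_assoc, le_div_iff₀ hLpos]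
    calc _ ≤ (1 + (2 * (t : ℝ) + 6) ^ 4 * 3 ^ 16) * (2 * t + 2) := by
          gcongr
          linarith
      _ ≤ 112 * 4 ^ t := hrem
      _ ≤ _ := by gcongr
  rw [mul_div_assoc] at hr2
  have hX : (0 : ℝ) ≤ (2 * (t : ℝ) + 6) ^ 4 * 3 ^ 16 := by positivity
  generalize (2 * (t : ℝ) + 6) ^ 4 * 3 ^ 16 = X at *
  generalize (d : ℝ) / L = Y at *
  calc (maxSdim d : ℝ) ≤ r * K + X := hnatR
    _ ≤ (400 * Y + 1) * K + X * K := by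
        have h1 : (r : ℝ) * K ≤ (400 * Y + 1) * K := by gcongr
        have h2 : X ≤ X * K := le_mul_of_one_le_right hX hK1
        linarith
    _ = (400 * Y + (1 + X)) * K := by ring
    _ ≤ 2 ^ 9 * Y * K := by
        gcongr
        linarith
end

section
/- For every positive integer d, the maximum separation dimension of a graph with maximum degree at most d is at most 2^{9·log* d} · d, where log* is the iterated logarithm (base 2). -/
/-- Iterated (base 2) logarithm: the number of times `log₂` must be applied
before the value drops to at most 1. -/
def logStar (n : ℕ) : ℕ :=
  if h : n ≤ 1 then 0 else logStar (Nat.log 2 n) + 1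
decreasing_by
  exact Nat.log_lt_self 2 (by omega)

/-! ### Sparse and greedy colourings -/

open Classical in
/-- The `C`-colourings of `S` (extended by the default colour `0` outside `S`) in which every
vertex of the graph sees each colour at most `t` times among its neighbours in `S`. -/
noncomputable def sparseColorings {V : Type*} [Fintype V] (G : SimpleGraph V) (C : Type*)
    [Fintype C] [Zero C] (t : ℕ) (S : Finset V) : Finset (V → C) :=
  Finset.univ.filter fun c => (∀ v ∉ S, c v = 0) ∧
    ∀ u k, (S.filter fun w => G.Adj u w ∧ c w = k).card ≤ t

open Classical in
/-- The colourings produced by a one-vertex extension that fail to be sparse are few: each of them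
has a neighbour `u` of `v` and a `t`-set `T` of coloured neighbours of `u` on which the colour `k`
of `v` is constant, and is then determined by `u`, `T`, `k` and its restriction to `S \ T`. -/
lemma card_bad_le {V : Type*} [Fintype V] (G : SimpleGraph V) (C : Type*)
    [Fintype C] [Zero C] (t d : ℕ) (hdeg : ∀ u, (Finset.univ.filter fun w => G.Adj u w).card ≤ d)
    (S : Finset V) (v : V) (hv : v ∉ S) (M : ℕ)
    (hM : ∀ T ⊆ S, T.card = t → Fintype.card C ^ t * (sparseColorings G C t (S \ T)).card ≤ M) :
    Fintype.card C ^ t * ((sparseColorings G C t S ×ˢ (Finset.univ : Finset C)).filter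
      fun p => Function.update p.1 v p.2 ∉ sparseColorings G C t (insert v S)).card
      ≤ d * d.choose t * Fintype.card C * M := by
  set N := Finset.univ.filter fun w => G.Adj v w with hN
  set P : V → Finset (Finset V) := fun u =>
    (S.filter fun w => G.Adj u w).powersetCard t with hP
  set Q : Finset V → Finset ((V → C) × C) := fun T =>
    (sparseColorings G C t S ×ˢ (Finset.univ : Finset C)).filter
      fun p => ∀ w ∈ T, p.1 w = p.2 with hQ
  have hsub : ((sparseColorings G C t S ×ˢ (Finset.univ : Finset C)).filter
      fun p => Function.update p.1 v p.2 ∉ sparseColorings G C t (insert v S)) ⊆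
      N.biUnion fun u => (P u).biUnion Q := by
    rintro ⟨c, k⟩ hp
    simp only [Finset.mem_filter, Finset.mem_product, Finset.mem_univ, and_true,
      sparseColorings, true_and, not_and, not_forall, not_le] at hp
    obtain ⟨⟨hc0, hct⟩, hbad⟩ := hp
    obtain ⟨u, k', hlt⟩ := hbad (by
      intro w hw
      rw [Finset.mem_insert, not_or] at hw
      rw [Function.update_of_ne hw.1]
      exact hc0 w hw.2)
    have hfil : (S.filter fun w => G.Adj u w ∧ Function.update c v k w = k') =
        S.filter fun w => G.Adj u w ∧ c w = k' := by
      refine Finset.filter_congr fun w hw => ?_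
      rw [Function.update_of_ne (by rintro rfl; exact hv hw)]
    rw [Finset.filter_insert] at hlt
    have hle := hct u k'
    split_ifs at hlt with huv
    · rw [Function.update_self] at huv
      obtain ⟨huv, rfl⟩ := huv
      rw [Finset.card_insert_of_notMem (by simp [hv]), hfil] at hlt
      simp only [Finset.mem_biUnion]
      refine ⟨u, by simp [hN, huv.symm], S.filter fun w => G.Adj u w ∧ c w = k, ?_, ?_⟩
      · rw [hP, Finset.mem_powersetCard]
        refine ⟨fun w hw => ?_, by omega⟩
        simp only [Finset.mem_filter] at hw ⊢
        exact ⟨hw.1, hw.2.1⟩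
      · simp only [hQ, Finset.mem_filter, Finset.mem_product, Finset.mem_univ, and_true,
          sparseColorings, true_and]
        exact ⟨⟨hc0, hct⟩, fun w hw => hw.2.2⟩
    · rw [hfil] at hlt
      omega
  have hQcard : ∀ T ⊆ S, T.card = t →
      Fintype.card C ^ t * (Q T).card ≤ Fintype.card C * M := by
    intro T hTS hTt
    have h1 : (Q T).card ≤ (sparseColorings G C t (S \ T) ×ˢ (Finset.univ : Finset C)).card := by
      refine Finset.card_le_card_of_injOn (fun p => (fun w => if w ∈ T then 0 else p.1 w, p.2))
        ?_ ?_
      · rintro ⟨c, k⟩ hp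
        simp only [hQ, Finset.coe_filter, Set.mem_ofPred_eq, Finset.mem_product, Finset.mem_univ,
          and_true, sparseColorings, Finset.mem_filter, true_and, Finset.coe_product,
          Set.mem_prod, Finset.coe_univ, Set.mem_univ] at hp ⊢
        obtain ⟨⟨hc0, hct⟩, -⟩ := hp
        refine ⟨fun w hw => ?_, fun u k' => le_trans (Finset.card_le_card fun w hw => ?_)
          (hct u k')⟩
        · split_ifs with h
          · rfl
          · exact hc0 w fun hS => hw (Finset.mem_sdiff.2 ⟨hS, h⟩)
        · simp only [Finset.mem_filter, Finset.mem_sdiff] at hw ⊢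
          rw [if_neg hw.1.2] at hw
          exact ⟨hw.1.1, hw.2⟩
      · rintro ⟨c, k⟩ hp ⟨c', k'⟩ hp' heq
        simp only [hQ, Finset.coe_filter, Set.mem_ofPred_eq] at hp hp'
        simp only [Prod.mk.injEq] at heq ⊢
        refine ⟨funext fun w => ?_, heq.2⟩
        by_cases hw : w ∈ T
        · rw [hp.2 w hw, hp'.2 w hw, heq.2]
        · have := congrFun heq.1 w
          simpa [hw] using this
    rw [Finset.card_product, Finset.card_univ] at h1
    calc _ ≤ Fintype.card C ^ t * ((sparseColorings G C t (S \ T)).card * Fintype.card C) :=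
          Nat.mul_le_mul_left _ h1
      _ = Fintype.card C * (Fintype.card C ^ t * (sparseColorings G C t (S \ T)).card) := by ring
      _ ≤ _ := Nat.mul_le_mul_left _ (hM T hTS hTt)
  have hPcard : ∀ u, (P u).card ≤ d.choose t := by
    intro u
    rw [hP, Finset.card_powersetCard]
    refine Nat.choose_le_choose t (le_trans (Finset.card_le_card fun w hw => ?_) (hdeg u))
    simp only [Finset.mem_filter, Finset.mem_univ, true_and] at hw ⊢
    exact hw.2
  calc _ ≤ Fintype.card C ^ t * ∑ u ∈ N, ∑ T ∈ P u, (Q T).card :=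
        Nat.mul_le_mul_left _ ((Finset.card_le_card hsub).trans
          (Finset.card_biUnion_le.trans (Finset.sum_le_sum fun u _ => Finset.card_biUnion_le)))
    _ = ∑ u ∈ N, ∑ T ∈ P u, Fintype.card C ^ t * (Q T).card := by
        simp only [Finset.mul_sum]
    _ ≤ ∑ u ∈ N, ∑ T ∈ P u, Fintype.card C * M := by
        refine Finset.sum_le_sum fun u _ => Finset.sum_le_sum fun T hT => ?_
        rw [hP, Finset.mem_powersetCard] at hT
        exact hQcard T (hT.1.trans (Finset.filter_subset _ _)) hT.2
    _ ≤ ∑ u ∈ N, d.choose t * (Fintype.card C * M) := by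
        refine Finset.sum_le_sum fun u _ => ?_
        rw [Finset.sum_const, smul_eq_mul]
        exact Nat.mul_le_mul_right _ (hPcard u)
    _ ≤ d * (d.choose t * (Fintype.card C * M)) := by
        rw [Finset.sum_const, smul_eq_mul]
        exact Nat.mul_le_mul_right _ (hdeg v)
    _ = _ := by ring

open Classical in
/-- Colouring one more vertex multiplies the number of sparse colourings by at least half the
number of colours. The induction is on `S`, since the bound on the failing extensions needs the
growth rate below `S`. -/
lemma card_sparse_insert {V : Type*} [Fintype V] (G : SimpleGraph V) (C : Type*)
    [Fintype C] [Zero C] (t d : ℕ) (hdeg : ∀ u, (Finset.univ.filter fun w => G.Adj u w).card ≤ d)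
    (hnum : 2 * (d * d.choose t * 2 ^ t) ≤ Fintype.card C ^ t) :
    ∀ (n : ℕ) (S : Finset V), S.card = n → ∀ v ∉ S, Fintype.card C * (sparseColorings G C t S).card
      ≤ 2 * (sparseColorings G C t (insert v S)).card := by
  intro n
  induction n using Nat.strong_induction_on with
  | _ n ih =>
  intro S hS v hv
  have hT : ∀ T ⊆ S, Fintype.card C ^ T.card * (sparseColorings G C t (S \ T)).card ≤
      2 ^ T.card * (sparseColorings G C t S).card := by
    intro T
    induction T using Finset.induction_on with
    | empty => simp
    | insert x T hx ihT =>
      intro hsub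
      have hxS : x ∈ S := hsub (Finset.mem_insert_self _ _)
      have h1 := ihT ((Finset.subset_insert _ _).trans hsub)
      have hins : insert x (S \ insert x T) = S \ T := by
        ext w
        simp only [Finset.mem_insert, Finset.mem_sdiff, not_or]
        by_cases hwx : w = x
        · subst hwx; simp [hxS, hx]
        · simp [hwx]
      have h2 := ih (S \ insert x T).card (by
        rw [← hS]
        refine Finset.card_lt_card (Finset.ssubset_iff_subset_ne.2 ⟨Finset.sdiff_subset, ?_⟩)
        intro h
        rw [← h] at hxS
        simp at hxS) _ rfl x (by simp)
      rw [hins] at h2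
      rw [Finset.card_insert_of_notMem hx, pow_succ, pow_succ]
      calc _ = Fintype.card C ^ T.card *
            (Fintype.card C * (sparseColorings G C t (S \ insert x T)).card) := by ring
        _ ≤ Fintype.card C ^ T.card * (2 * (sparseColorings G C t (S \ T)).card) :=
            Nat.mul_le_mul_left _ h2
        _ = 2 * (Fintype.card C ^ T.card * (sparseColorings G C t (S \ T)).card) := by ring
        _ ≤ 2 * _ := Nat.mul_le_mul_left _ h1
        _ = _ := by ring
  have hbad := card_bad_le G C t d hdeg S v hv (2 ^ t * (sparseColorings G C t S).card) (by
    intro T hTS hTt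
    have := hT T hTS
    rwa [hTt] at this)
  have hgood : ((sparseColorings G C t S ×ˢ (Finset.univ : Finset C)).filter
      fun p => Function.update p.1 v p.2 ∈ sparseColorings G C t (insert v S)).card ≤
      (sparseColorings G C t (insert v S)).card := by
    refine Finset.card_le_card_of_injOn (fun p => Function.update p.1 v p.2) ?_ ?_
    · intro p hp
      simp only [Finset.coe_filter, Set.mem_ofPred_eq] at hp
      exact hp.2
    · rintro ⟨c, k⟩ hp ⟨c', k'⟩ hp' heq
      simp only [Finset.coe_filter, Set.mem_ofPred_eq, Finset.mem_product, sparseColorings,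
        Finset.mem_filter, Finset.mem_univ, true_and] at hp hp' heq
      simp only [Prod.mk.injEq]
      refine ⟨funext fun w => ?_, by simpa using congrFun heq v⟩
      by_cases hw : w = v
      · subst hw
        rw [hp.1.1.1 _ hv, hp'.1.1.1 _ hv]
      · simpa [hw] using congrFun heq w
  have hsplit := Finset.card_filter_add_card_filter_not
    (s := sparseColorings G C t S ×ˢ (Finset.univ : Finset C))
    (fun p => Function.update p.1 v p.2 ∈ sparseColorings G C t (insert v S))
  rw [Finset.card_product, Finset.card_univ] at hsplit
  set A := (sparseColorings G C t S).card
  set r := Fintype.card C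
  generalize ((sparseColorings G C t S ×ˢ (Finset.univ : Finset C)).filter
      fun p => Function.update p.1 v p.2 ∉ sparseColorings G C t (insert v S)).card = B at *
  rcases Nat.eq_zero_or_pos (r ^ t) with h0 | hpos
  · have : r = 0 := by
      by_contra h
      exact (pow_pos (Nat.pos_of_ne_zero h) t).ne' h0
    simp [this]
  · have h3 : 2 * B ≤ r * A := by
      refine Nat.le_of_mul_le_mul_left ?_ hpos
      calc r ^ t * (2 * B) = 2 * (r ^ t * B) := by ring
        _ ≤ 2 * (d * d.choose t * r * (2 ^ t * A)) := Nat.mul_le_mul_left _ hbad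
        _ = (2 * (d * d.choose t * 2 ^ t)) * (r * A) := by ring
        _ ≤ _ := Nat.mul_le_mul_right _ hnum
    rw [mul_comm A r] at hsplit
    omega

open Classical in
lemma exists_sparse {V : Type*} [Fintype V] (G : SimpleGraph V) (C : Type*)
    [Fintype C] [Zero C] (t d : ℕ) (hdeg : ∀ u, (Finset.univ.filter fun w => G.Adj u w).card ≤ d)
    (hnum : 2 * (d * d.choose t * 2 ^ t) ≤ Fintype.card C ^ t) :
    ∃ c : V → C, ∀ u k, {w | G.Adj u w ∧ c w = k}.ncard ≤ t := by
  have h : ∀ S : Finset V, 0 < (sparseColorings G C t S).card := by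
    intro S
    induction S using Finset.induction_on with
    | empty =>
      refine Finset.card_pos.2 ⟨fun _ => 0, ?_⟩
      simp [sparseColorings]
    | insert v S hv ih =>
      have h1 := card_sparse_insert G C t d hdeg hnum _ S rfl v hv
      have h2 : 0 < Fintype.card C := Fintype.card_pos_iff.2 ⟨0⟩
      have := Nat.mul_pos h2 ih
      omega
  obtain ⟨c, hc⟩ := Finset.card_pos.1 (h Finset.univ)
  simp only [sparseColorings, Finset.mem_filter, Finset.mem_univ, true_and] at hc
  refine ⟨c, fun u k => ?_⟩
  have h1 := hc.2 u k
  rw [← Set.ncard_coe_finset] at h1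
  simpa using h1

/-- With `t = ⌊log₂ d⌋` and at least `48 d / t` colours the counting hypothesis holds:
`d.choose t ≤ d ^ t / t !`, `t ! ≥ (t / 3) ^ t` and `2 * d ≤ 8 ^ t`. -/
lemma numeric_bound_s9 (d t r : ℕ) (ht : 1 ≤ t) (hd : d < 2 ^ (t + 1)) (hr : 48 * d ≤ r * t) :
    2 * (d * d.choose t * 2 ^ t) ≤ r ^ t := by
  have hfact : t ^ t ≤ 3 ^ t * t.factorial := by
    have h1 := Real.pow_div_factorial_le_exp (x := (t : ℝ)) (Nat.cast_nonneg t) t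
    have h2 : Real.exp t ≤ 3 ^ t := by
      rw [← Real.exp_one_pow]
      exact pow_le_pow_left₀ (Real.exp_pos 1).le Real.exp_one_lt_three.le t
    have h3 : (0 : ℝ) < t.factorial := by exact_mod_cast t.factorial_pos
    have h4 := (div_le_iff₀ h3).1 (h1.trans h2)
    exact_mod_cast h4
  have hchoose : t.factorial * d.choose t ≤ d ^ t := by
    rw [← Nat.descFactorial_eq_factorial_mul_choose]
    exact Nat.descFactorial_le_pow d t
  have h8 : 2 * d ≤ 8 ^ t := by
    calc 2 * d ≤ 2 ^ (t + 2) := by rw [pow_succ]; omega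
      _ ≤ 2 ^ (3 * t) := Nat.pow_le_pow_right (by norm_num) (by omega)
      _ = 8 ^ t := by rw [pow_mul]; norm_num
  refine le_of_mul_le_mul_left (a := 3 ^ t * t.factorial) ?_
    (Nat.mul_pos (by positivity) t.factorial_pos)
  calc 3 ^ t * t.factorial * (2 * (d * d.choose t * 2 ^ t))
      = 3 ^ t * 2 ^ t * (2 * d) * (t.factorial * d.choose t) := by ring
    _ ≤ 3 ^ t * 2 ^ t * 8 ^ t * d ^ t := by gcongr
    _ = (48 * d) ^ t := by rw [← mul_pow, ← mul_pow, ← mul_pow]; norm_num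
    _ ≤ (r * t) ^ t := Nat.pow_le_pow_left hr t
    _ = t ^ t * r ^ t := by rw [mul_pow, mul_comm]
    _ ≤ 3 ^ t * t.factorial * r ^ t := Nat.mul_le_mul_right _ hfact

open Classical in
/-- Greedy proper colouring with the colours `0, …, t`. -/
lemma exists_greedy {V : Type*} [Fintype V] (H : SimpleGraph V) (t : ℕ)
    (hdeg : ∀ u, (H.neighborSet u).ncard ≤ t) :
    ∃ h : V → ℕ, (∀ v, h v < t + 1) ∧ ∀ a b, H.Adj a b → h a ≠ h b := by
  have key : ∀ S : Finset V, ∃ h : V → ℕ, (∀ v, h v < t + 1) ∧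
      ∀ a ∈ S, ∀ b ∈ S, H.Adj a b → h a ≠ h b := by
    intro S
    induction S using Finset.induction_on with
    | empty => exact ⟨fun _ => 0, by simp, by simp⟩
    | insert v S hv ih =>
      obtain ⟨h, hlt, hprop⟩ := ih
      obtain ⟨k, hk, hkn⟩ := Finset.exists_mem_notMem_of_card_lt_card
        (s := (H.neighborSet v).toFinset.image h) (t := Finset.range (t + 1)) (by
          rw [Finset.card_range]
          refine Nat.lt_succ_of_le (Finset.card_image_le.trans ?_)
          rw [← Set.ncard_eq_toFinset_card']
          exact hdeg v)
      have hne : ∀ w, H.Adj v w → h w ≠ k := by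
        intro w hw he
        exact hkn (Finset.mem_image.2 ⟨w, by simp [hw], he⟩)
      refine ⟨Function.update h v k, fun w => ?_, fun a ha b hb hab => ?_⟩
      · by_cases hw : w = v
        · subst hw; simpa using hk
        · simpa [hw] using hlt w
      · by_cases hav : a = v
        · subst hav
          rw [Function.update_self, Function.update_of_ne hab.ne']
          exact (hne b hab).symm
        · rw [Function.update_of_ne hav]
          by_cases hbv : b = v
          · subst hbv
            rw [Function.update_self]
            exact hne a hab.symm
          · rw [Function.update_of_ne hbv]
            exact hprop a (Finset.mem_of_mem_insert_of_ne ha hav) b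
              (Finset.mem_of_mem_insert_of_ne hb hbv) hab
  obtain ⟨h, h1, h2⟩ := key Finset.univ
  exact ⟨h, h1, fun a b => h2 a (Finset.mem_univ a) b (Finset.mem_univ b)⟩

/-! ### Orders built from a proper colouring -/

lemma separates_mk_s9 {V : Type*} {σ : V → ℕ} {a b x y : V} (h1 : σ a < σ x) (h2 : σ a < σ y)
    (h3 : σ b < σ x) (h4 : σ b < σ y) : Separates σ s(a, b) s(x, y) := by
  left
  intro u hu w hw
  rw [Sym2.mem_iff] at hu hw
  rcases hu with rfl | rfl <;> rcases hw with rfl | rfl <;> assumption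

lemma Separates.symm {V : Type*} {σ : V → ℕ} {e f : Sym2 V} (h : Separates σ e f) :
    Separates σ f e := Or.symm h

lemma block_lt {m A B i k : ℕ} (h : A < B) (hi : i < m) : A * m + i < B * m + k := by
  have := Nat.mul_le_mul_right m (Nat.succ_le_of_lt h)
  rw [Nat.succ_mul] at this
  omega

/-- The vertex order attached to a vertex colouring `c` (with colours below `R`) and a colour `j`:
colour class `j` comes first, the other classes follow by increasing (`p = true`) or decreasing
(`p = false`) colour, and inside each class the vertices are increasing or decreasing according
to `q`. -/
def starOrder {m : ℕ} (R : ℕ) (c : Fin m → ℕ) (j : ℕ) (p q : Bool) (v : Fin m) : ℕ :=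
  (if c v = j then 0 else 1 + if p then c v else R - c v) * m +
    if q then v.val else m - 1 - v.val

lemma starOrder_injective {m : ℕ} (R : ℕ) (c : Fin m → ℕ) (j : ℕ) (p q : Bool) :
    Function.Injective (starOrder R c j p q) := by
  intro v w h
  have hv := v.isLt
  have hw := w.isLt
  have h2 := congrArg (· % m) h
  unfold starOrder at h2
  simp only [Nat.mul_add_mod_self_right] at h2
  apply Fin.ext
  cases q
  · simp only [Bool.false_eq_true, if_false] at h2
    rw [Nat.mod_eq_of_lt (by omega), Nat.mod_eq_of_lt (by omega)] at h2
    omega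
  · simp only [if_true] at h2
    rwa [Nat.mod_eq_of_lt hv, Nat.mod_eq_of_lt hw] at h2

lemma starOrder_lt_of_first {m R j : ℕ} {c : Fin m → ℕ} {p q : Bool} {v w : Fin m}
    (hv : c v = j) (hw : c w ≠ j) : starOrder R c j p q v < starOrder R c j p q w := by
  have h1 := v.isLt
  unfold starOrder
  rw [if_pos hv, if_neg hw]
  refine block_lt (by omega) ?_
  split_ifs <;> omega

lemma starOrder_lt_of_lt {m R j : ℕ} {c : Fin m → ℕ} {q : Bool} {v w : Fin m}
    (hw : c w ≠ j) (h : c v < c w) :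
    starOrder R c j true q v < starOrder R c j true q w := by
  have h1 := v.isLt
  unfold starOrder
  simp only [if_neg hw, if_true]
  refine block_lt ?_ ?_ <;> split_ifs <;> omega

lemma starOrder_lt_of_gt {m R j : ℕ} {c : Fin m → ℕ} {q : Bool} {v w : Fin m}
    (hR : c v < R) (hw : c w ≠ j) (h : c w < c v) :
    starOrder R c j false q v < starOrder R c j false q w := by
  have h1 := v.isLt
  unfold starOrder
  simp only [if_neg hw, Bool.false_eq_true, if_false]
  refine block_lt ?_ ?_ <;> split_ifs <;> omega

lemma starOrder_lt_of_eq {m R j : ℕ} {c : Fin m → ℕ} {p : Bool} {v w : Fin m} (h : c v = c w)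
    (hvw : v ≠ w) : starOrder R c j p (decide (v < w)) v < starOrder R c j p (decide (v < w)) w := by
  have h1 := v.isLt
  have h2 := w.isLt
  have h3 : v.val ≠ w.val := fun h => hvw (Fin.ext h)
  unfold starOrder
  rw [h]
  refine Nat.add_lt_add_left ?_ _
  by_cases hlt : v < w
  · simp [hlt]
  · have h4 : ¬ v.val < w.val := hlt
    simp only [hlt, decide_false, Bool.false_eq_true, if_false]
    omega

/-- Edges whose colour pairs meet in exactly one colour: the order starting with the other colour
of one of the edges separates them, for a suitable choice of the two directions. -/
lemma exists_star_of_shared {m : ℕ} (R : ℕ) (c : Fin m → ℕ) (hc : ∀ v, c v < R) {a b x y : Fin m}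
    (hab : c a ≠ c b) (hxy : c x ≠ c y) (hax : a ≠ x) (h : c a = c x) (hby : c b ≠ c y) :
    ∃ j < R, ∃ p q, Separates (starOrder R c j p q) s(a, b) s(x, y) := by
  have hbx : c x ≠ c b := h ▸ hab
  rcases lt_or_gt_of_ne hxy with hlt | hgt
  · exact ⟨c b, hc b, true, decide (a < x), separates_mk_s9 (starOrder_lt_of_eq h hax)
      (starOrder_lt_of_lt hby.symm (h ▸ hlt)) (starOrder_lt_of_first rfl hbx)
      (starOrder_lt_of_first rfl hby.symm)⟩
  · exact ⟨c b, hc b, false, decide (a < x), separates_mk_s9 (starOrder_lt_of_eq h hax)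
      (starOrder_lt_of_gt (hc a) hby.symm (h ▸ hgt)) (starOrder_lt_of_first rfl hbx)
      (starOrder_lt_of_first rfl hby.symm)⟩

/-- If `a` has the smallest of four colours, putting the colour of its partner `b` first
separates. -/
lemma exists_star_of_min {m : ℕ} (R : ℕ) (c : Fin m → ℕ) (hc : ∀ v, c v < R) {a b x y : Fin m}
    (hbx : c b ≠ c x) (hby : c b ≠ c y) (hax : c a < c x) (hay : c a < c y) :
    ∃ j < R, ∃ p q, Separates (starOrder R c j p q) s(a, b) s(x, y) :=
  ⟨c b, hc b, true, true, separates_mk_s9 (starOrder_lt_of_lt hbx.symm hax)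
    (starOrder_lt_of_lt hby.symm hay) (starOrder_lt_of_first rfl hbx.symm)
    (starOrder_lt_of_first rfl hby.symm)⟩

lemma exists_star {m : ℕ} (R : ℕ) (c : Fin m → ℕ) (hc : ∀ v, c v < R) {a b x y : Fin m}
    (hab : c a ≠ c b) (hxy : c x ≠ c y) (hax : a ≠ x) (hay : a ≠ y) (hbx : b ≠ x) (hby : b ≠ y)
    (h1 : ¬ (c a = c x ∧ c b = c y)) (h2 : ¬ (c a = c y ∧ c b = c x)) :
    ∃ j < R, ∃ p q, Separates (starOrder R c j p q) s(a, b) s(x, y) := by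
  by_cases e1 : c a = c x
  · exact exists_star_of_shared R c hc hab hxy hax e1 fun h => h1 ⟨e1, h⟩
  by_cases e2 : c a = c y
  · rw [Sym2.eq_swap (a := x)]
    exact exists_star_of_shared R c hc hab hxy.symm hay e2 fun h => h2 ⟨e2, h⟩
  by_cases e3 : c b = c x
  · rw [Sym2.eq_swap (a := a)]
    exact exists_star_of_shared R c hc hab.symm hxy hbx e3 e2
  by_cases e4 : c b = c y
  · rw [Sym2.eq_swap (a := a), Sym2.eq_swap (a := x)]
    exact exists_star_of_shared R c hc hab.symm hxy.symm hby e4 e1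
  by_cases l1 : c a < c x ∧ c a < c y
  · exact exists_star_of_min R c hc e3 e4 l1.1 l1.2
  by_cases l2 : c b < c x ∧ c b < c y
  · rw [Sym2.eq_swap (a := a)]
    exact exists_star_of_min R c hc e1 e2 l2.1 l2.2
  by_cases l3 : c x < c a ∧ c x < c b
  · obtain ⟨j, hj, p, q, h⟩ :=
      exists_star_of_min R c hc (Ne.symm e2) (Ne.symm e4) l3.1 l3.2
    exact ⟨j, hj, p, q, h.symm⟩
  · rw [Sym2.eq_swap (a := x)]
    obtain ⟨j, hj, p, q, h⟩ := exists_star_of_min R c hc (a := y) (b := x) (x := a) (y := b)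
      (Ne.symm e1) (Ne.symm e3) (by omega) (by omega)
    exact ⟨j, hj, p, q, h.symm⟩

/-! ### The recursion -/

/-- The subgraph of the edges whose end colours add up to `k`. -/
def sumSubgraph {m r : ℕ} (G : SimpleGraph (Fin m)) (c : Fin m → ZMod r) (k : ZMod r) :
    SimpleGraph (Fin m) where
  Adj u w := G.Adj u w ∧ c u + c w = k
  symm := ⟨fun u w h => ⟨h.1.symm, by rw [add_comm]; exact h.2⟩⟩
  loopless := ⟨fun u h => G.loopless.irrefl u h.1⟩

open Classical in
lemma ncard_neighborSet {m : ℕ} (G : SimpleGraph (Fin m)) (u : Fin m) :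
    (G.neighborSet u).ncard = (Finset.univ.filter fun w => G.Adj u w).card := by
  rw [← Set.ncard_coe_finset]
  congr 1
  ext w
  simp

open Classical in
/-- The recursive step. Split the vertices into `48 d / t + 1` parts in which every vertex has at
most `t` neighbours, and refine by a proper colouring of the graph of edges inside parts. Star
orders separate edges with different refined colour pairs; edges with the same pair lie in a common
`sumSubgraph`, which has maximum degree at most `t`. -/
lemma recursive_step {m d t B : ℕ} (G : SimpleGraph (Fin m)) (ht : 1 ≤ t) (hd : d < 2 ^ (t + 1))
    (hdeg : ∀ v, (G.neighborSet v).ncard ≤ d)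
    (ih : ∀ H : SimpleGraph (Fin m), (∀ v, (H.neighborSet v).ncard ≤ t) →
      ∃ F, PairwiseSuitable H F ∧ F.card ≤ B) :
    ∃ F, PairwiseSuitable G F ∧
      F.card ≤ (48 * d / t + 1) * B + 4 * ((48 * d / t + 1) * (t + 1)) := by
  set r := 48 * d / t + 1 with hr
  have hrt : 48 * d ≤ r * t := by
    have := Nat.div_add_mod (48 * d) t
    have h2 := Nat.mod_lt (48 * d) ht
    rw [hr, add_mul, mul_comm (48 * d / t), one_mul]
    omega
  obtain ⟨c, hc⟩ := exists_sparse G (ZMod r) t d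
    (fun u => by rw [← ncard_neighborSet]; exact hdeg u)
    (by rw [ZMod.card]; exact numeric_bound_s9 d t r ht hd hrt)
  have hsum : ∀ k, ∀ v, ((sumSubgraph G c k).neighborSet v).ncard ≤ t := by
    intro k v
    refine (Set.ncard_le_ncard (fun w hw => ?_) (Set.toFinite _)).trans (hc v (k - c v))
    have hw' : G.Adj v w ∧ c v + c w = k := hw
    exact ⟨hw'.1, by rw [← hw'.2]; ring⟩
  choose F hF hFcard using fun k => ih (sumSubgraph G c k) (hsum k)
  -- the graph of edges inside the parts
  let H : SimpleGraph (Fin m) :=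
    { Adj := fun u w => G.Adj u w ∧ c w = c u
      symm := ⟨fun u w h => ⟨h.1.symm, h.2.symm⟩⟩
      loopless := ⟨fun u h => G.loopless.irrefl u h.1⟩ }
  obtain ⟨h, hlt, hproper⟩ := exists_greedy H t fun u => hc u (c u)
  set R := r * (t + 1) with hR
  let c' : Fin m → ℕ := fun v => (c v).val * (t + 1) + h v
  have hc'R : ∀ v, c' v < R := fun v => by
    have := block_lt (k := 0) (ZMod.val_lt (c v)) (hlt v)
    simpa using this
  have hc'eq : ∀ v w, c' v = c' w → c v = c w ∧ h v = h w := by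
    intro v w hvw
    have h1 : (c v).val = (c w).val := by
      rcases lt_trichotomy (c v).val (c w).val with hl | hl | hl
      · exact absurd hvw (block_lt hl (hlt v)).ne
      · exact hl
      · exact absurd hvw (block_lt hl (hlt w)).ne'
    refine ⟨ZMod.val_injective _ h1, ?_⟩
    simp only [c', h1] at hvw
    omega
  have hc'ne : ∀ v w, G.Adj v w → c' v ≠ c' w := by
    intro v w hvw he
    have := hc'eq v w he
    exact hproper v w ⟨hvw, this.1.symm⟩ this.2
  let S : Finset (Fin m → ℕ) :=
    (Finset.range R ×ˢ (Finset.univ : Finset (Bool × Bool))).image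
      fun z => starOrder R c' z.1 z.2.1 z.2.2
  have hScard : S.card ≤ 4 * R := by
    refine Finset.card_image_le.trans ?_
    rw [Finset.card_product, Finset.card_range, Finset.card_univ]
    simp [mul_comm]
  refine ⟨Finset.univ.biUnion F ∪ S, ⟨?_, ?_⟩, ?_⟩
  · intro σ hσ
    rcases Finset.mem_union.1 hσ with hσ | hσ
    · obtain ⟨k, -, hk⟩ := Finset.mem_biUnion.1 hσ
      exact (hF k).1 σ hk
    · obtain ⟨z, -, rfl⟩ := Finset.mem_image.1 hσ
      exact starOrder_injective R c' _ _ _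
  · intro e
    induction e using Sym2.ind with
    | _ a b =>
    intro he f
    induction f using Sym2.ind with
    | _ x y =>
    intro hf hdis
    rw [SimpleGraph.mem_edgeSet] at he hf
    have ha := hdis a (Sym2.mem_mk_left a b)
    have hb := hdis b (Sym2.mem_mk_right a b)
    rw [Sym2.mem_iff, not_or] at ha hb
    by_cases hs : (c' a = c' x ∧ c' b = c' y) ∨ (c' a = c' y ∧ c' b = c' x)
    · have hs' : c x + c y = c a + c b := by
        rcases hs with ⟨h1, h2⟩ | ⟨h1, h2⟩
        · rw [(hc'eq _ _ h1).1, (hc'eq _ _ h2).1]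
        · rw [(hc'eq _ _ h1).1, (hc'eq _ _ h2).1, add_comm]
      obtain ⟨σ, hσ, hsep⟩ := (hF (c a + c b)).2 s(a, b) ⟨he, rfl⟩ s(x, y) ⟨hf, hs'⟩ hdis
      exact ⟨σ, Finset.mem_union_left _ (Finset.mem_biUnion.2 ⟨_, Finset.mem_univ _, hσ⟩), hsep⟩
    · rw [not_or] at hs
      obtain ⟨j, hj, p, q, hsep⟩ := exists_star R c' hc'R (hc'ne a b he) (hc'ne x y hf)
        ha.1 ha.2 hb.1 hb.2 hs.1 hs.2
      exact ⟨_, Finset.mem_union_right _ (Finset.mem_image.2 ⟨(j, p, q), by simp [hj], rfl⟩), hsep⟩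
  · refine (Finset.card_union_le _ _).trans (Nat.add_le_add ?_ hScard)
    refine Finset.card_biUnion_le.trans ((Finset.sum_le_sum fun k _ => hFcard k).trans ?_)
    rw [Finset.sum_const, Finset.card_univ, ZMod.card, smul_eq_mul]

/-- A matching needs a single order: list the vertices edge by edge. -/
lemma degree_one {m : ℕ} (G : SimpleGraph (Fin m)) (hdeg : ∀ v, (G.neighborSet v).ncard ≤ 1) :
    ∃ F, PairwiseSuitable G F ∧ F.card ≤ 1 := by
  have huniq : ∀ a b w, G.Adj a b → G.Adj a w → w = b := fun a b w hb hw =>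
    (Set.ncard_le_one (Set.toFinite _)).1 (hdeg a) w hw b hb
  -- the least vertex of the closed neighbourhood
  let M : Fin m → ℕ := fun v => sInf {n | ∃ w : Fin m, (w = v ∨ G.Adj v w) ∧ w.val = n}
  have hM : ∀ v, ∃ w : Fin m, (w = v ∨ G.Adj v w) ∧ w.val = M v := fun v =>
    Nat.sInf_mem (s := {n | ∃ w : Fin m, (w = v ∨ G.Adj v w) ∧ w.val = n}) ⟨v.val, v, Or.inl rfl, rfl⟩
  have hMadj : ∀ a b, G.Adj a b → M a = M b := by
    intro a b hab
    have : ∀ w, (w = a ∨ G.Adj a w) ↔ (w = b ∨ G.Adj b w) := fun w => by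
      constructor
      · rintro (rfl | hw)
        · exact Or.inr hab.symm
        · exact Or.inl (huniq a b w hab hw)
      · rintro (rfl | hw)
        · exact Or.inr hab
        · exact Or.inl (huniq b a w hab.symm hw)
    simp only [M, this]
  have hMmem : ∀ a b, G.Adj a b → M a = a.val ∨ M a = b.val := by
    intro a b hab
    obtain ⟨w, hw | hw, hwM⟩ := hM a
    · exact Or.inl (by rw [← hwM, hw])
    · exact Or.inr (by rw [← hwM, huniq a b w hab hw])
  refine ⟨{fun v => M v * m + v.val}, ⟨?_, ?_⟩, by simp⟩
  · intro σ hσ v w hvw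
    rw [Finset.mem_singleton] at hσ
    subst hσ
    have h2 := congrArg (· % m) hvw
    simp only [Nat.mul_add_mod_self_right, Nat.mod_eq_of_lt v.isLt, Nat.mod_eq_of_lt w.isLt] at h2
    exact Fin.ext h2
  · intro e
    induction e using Sym2.ind with
    | _ a b =>
    intro he f
    induction f using Sym2.ind with
    | _ x y =>
    intro hf hdis
    rw [SimpleGraph.mem_edgeSet] at he hf
    have ha := hdis a (Sym2.mem_mk_left a b)
    have hb := hdis b (Sym2.mem_mk_right a b)
    rw [Sym2.mem_iff, not_or] at ha hb
    refine ⟨_, Finset.mem_singleton_self _, ?_⟩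
    have hne : M a ≠ M x := by
      have h1 := hMmem a b he
      have h2 := hMmem x y hf
      simp only [Fin.ext_iff] at ha hb
      omega
    have hab := hMadj a b he
    have hxy := hMadj x y hf
    rcases lt_or_gt_of_ne hne with hlt | hlt
    · apply separates_mk_s9 <;> refine block_lt ?_ (Fin.isLt _) <;> omega
    · apply Separates.symm
      apply separates_mk_s9 <;> refine block_lt ?_ (Fin.isLt _) <;> omega

lemma exists_suitable_s9 (d : ℕ) : 0 < d → ∀ (m : ℕ) (G : SimpleGraph (Fin m)),
    (∀ v, (G.neighborSet v).ncard ≤ d) →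
    ∃ F, PairwiseSuitable G F ∧ F.card ≤ 2 ^ (9 * logStar d) * d := by
  induction d using Nat.strong_induction_on with
  | _ d ih =>
  intro hd m G hdeg
  rcases Nat.lt_or_ge 1 d with h1 | h1
  · have ht : 1 ≤ Nat.log 2 d := Nat.log_pos (by norm_num) h1
    obtain ⟨F, hF, hcard⟩ := recursive_step (t := Nat.log 2 d) G ht
      (Nat.lt_pow_succ_log_self (by norm_num) d) hdeg
      (ih (Nat.log 2 d) (Nat.log_lt_self 2 (by omega)) ht m)
    refine ⟨F, hF, hcard.trans ?_⟩
    have hlog : logStar d = logStar (Nat.log 2 d) + 1 := by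
      rw [logStar, dif_neg (by omega)]
    have htd : Nat.log 2 d ≤ d := Nat.log_le_self 2 d
    rw [hlog]
    generalize Nat.log 2 d = t at *
    have hr : (48 * d / t + 1) * t ≤ 49 * d := by
      have := Nat.div_mul_le_self (48 * d) t
      rw [add_mul, one_mul]
      omega
    generalize 48 * d / t + 1 = r at *
    have hP : 1 ≤ 2 ^ (9 * logStar t) := Nat.one_le_two_pow
    rw [mul_add 9, pow_add]
    generalize 2 ^ (9 * logStar t) = P at *
    calc r * (P * t) + 4 * (r * (t + 1))
        ≤ r * (P * t) + 4 * (r * (t + t)) := by gcongr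
      _ = P * (r * t) + 8 * (r * t) := by ring
      _ ≤ P * (49 * d) + 8 * (49 * d) := by gcongr
      _ ≤ P * (49 * d) + P * (8 * (49 * d)) := by
          exact Nat.add_le_add_left (Nat.le_mul_of_pos_left _ hP) _
      _ = 441 * (P * d) := by ring
      _ ≤ 512 * (P * d) := Nat.mul_le_mul_right _ (by norm_num)
      _ = _ := by ring
  · obtain rfl : d = 1 := by omega
    simpa [logStar] using degree_one G hdeg

theorem stmt9 (d : ℕ) (hd : 0 < d) :
    maxSdim d ≤ 2 ^ (9 * logStar d) * d := by
  refine csSup_le' fun k hk => ?_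
  obtain ⟨m, G, hdeg, rfl⟩ := hk
  obtain ⟨F, hF, hcard⟩ := exists_suitable_s9 d hd m G hdeg
  have h : sdim G ≤ F.card := Nat.sInf_le ⟨F, hF, rfl⟩
  exact h.trans hcard
end

section
/- Let d ≥ 3 and let G be a d-regular graph on n vertices. Suppose there exist δ ∈ (0, 1) with ((d−1)/2)·((1+δ)/(1−δ)) ≤ (d/2 − 1/4) and ε > 0 such that every vertex subset S of size at most εn spans at most (1+δ)|S| edges, and n > 4(d+1)·(1/(δε))^{d/2}. Then the separation dimension of G is at least ceil(d/2). -/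
/-! ### Pairwise intersecting edges -/

/-- A family of pairwise intersecting edges is contained in a star, which has at most `d` members
by `hstar`, or in a triangle. -/
lemma card_le_of_intersecting {V : Type*} [DecidableEq V] (d : ℕ) (hd : 3 ≤ d)
    (A : Finset (Sym2 V)) (hstar : ∀ v, (A.filter (fun e => v ∈ e)).card ≤ d)
    (hmeet : ∀ e ∈ A, ∀ f ∈ A, ∃ v, v ∈ e ∧ v ∈ f) : A.card ≤ d := by
  have star : ∀ v, (∀ e ∈ A, v ∈ e) → A.card ≤ d := by
    intro v hv
    have h := hstar v
    rwa [Finset.filter_true_of_mem hv] at h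
  rcases A.eq_empty_or_nonempty with rfl | ⟨e, he⟩
  · simp
  induction e with | _ u v => ?_
  by_cases hu : ∀ e ∈ A, u ∈ e
  · exact star u hu
  by_cases hv : ∀ e ∈ A, v ∈ e
  · exact star v hv
  push Not at hu hv
  obtain ⟨f, hf, huf⟩ := hu
  obtain ⟨g, hg, hvg⟩ := hv
  have hvf : v ∈ f := by
    obtain ⟨x, hx, hxf⟩ := hmeet _ he _ hf
    rcases Sym2.mem_iff.1 hx with rfl | rfl
    · exact absurd hxf huf
    · exact hxf
  have hug : u ∈ g := by
    obtain ⟨x, hx, hxg⟩ := hmeet _ he _ hg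
    rcases Sym2.mem_iff.1 hx with rfl | rfl
    · exact hxg
    · exact absurd hxg hvg
  obtain ⟨w, rfl⟩ := Sym2.mem_iff_exists.1 hvf
  have huv : u ≠ v := by rintro rfl; exact huf hvf
  have huw : u ≠ w := by rintro rfl; exact huf (by simp)
  have hwg : w ∈ g := by
    obtain ⟨x, hx, hxg⟩ := hmeet _ hf _ hg
    rcases Sym2.mem_iff.1 hx with rfl | rfl
    · exact absurd hxg hvg
    · exact hxg
  have hgeq : g = s(u, w) := (Sym2.mem_and_mem_iff huw).1 ⟨hug, hwg⟩
  subst hgeq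
  have hvw : v ≠ w := by rintro rfl; exact hvg hwg
  -- the three edges found so far form a triangle on `u`, `v`, `w`; no fourth edge meets all of them
  have hsub : A ⊆ {s(u, v), s(v, w), s(u, w)} := by
    intro h hh
    have h1 := hmeet _ he _ hh
    have h2 := hmeet _ hf _ hh
    have h3 := hmeet _ hg _ hh
    simp only [Sym2.mem_iff] at h1 h2 h3
    simp only [Finset.mem_insert, Finset.mem_singleton]
    rw [← Sym2.mem_and_mem_iff huv, ← Sym2.mem_and_mem_iff hvw, ← Sym2.mem_and_mem_iff huw]
    grind
  exact (Finset.card_le_card hsub).trans (Finset.card_le_three.trans hd)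

/-! ### Short and long edges of one order -/

/-- Replacing the values of `σ` by their ranks. -/
lemma exists_rank {V : Type*} [Fintype V] (σ : V → ℕ) (hσ : Function.Injective σ) :
    ∃ p : V → ℕ, Function.Injective p ∧ (∀ v, p v < Fintype.card V) ∧
      ∀ u v, σ u < σ v → p u < p v := by
  classical
  have hmono : ∀ u v, σ u < σ v →
      (Finset.univ.filter (fun w => σ w < σ u)).card <
        (Finset.univ.filter (fun w => σ w < σ v)).card := by
    intro u v huv
    apply Finset.card_lt_card
    rw [Finset.ssubset_iff_of_subset]
    · exact ⟨u, by simpa using huv, by simp⟩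
    · intro w hw
      simp only [Finset.mem_filter, Finset.mem_univ, true_and] at hw ⊢
      omega
  refine ⟨fun v => (Finset.univ.filter (fun w => σ w < σ v)).card, ?_, ?_, hmono⟩
  · intro u v huv
    dsimp only at huv
    rcases lt_trichotomy (σ u) (σ v) with h | h | h
    · have := hmono _ _ h; omega
    · exact hσ h
    · have := hmono _ _ h; omega
  · intro v
    apply Finset.card_lt_univ_of_notMem (x := v)
    simp

open Classical in
/-- The double count of pairs (short edge, window containing it). The window indexed by `j`
consists of the vertices in positions `j - m + 1, …, j`; it may stick out at both ends, so that
each vertex lies in exactly `m` windows. -/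
lemma short_count {V : Type*} [Fintype V] (E : Finset (Sym2 V)) (p : V → ℕ)
    (hp : Function.Injective p) (hlt : ∀ v, p v < Fintype.card V) (m l : ℕ) (c : ℝ)
    (hexp : ∀ S : Finset V, S.card ≤ m →
      ((E.filter (fun e => ∀ v ∈ e, v ∈ S)).card : ℝ) ≤ c * S.card)
    (A : Finset (Sym2 V)) (hAE : A ⊆ E) (hA : ∀ e ∈ A, ∀ u ∈ e, ∀ v ∈ e, p v ≤ p u + l) :
    (A.card : ℝ) * ((m - l : ℕ) : ℝ) ≤ c * (Fintype.card V * m) := by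
  classical
  set n := Fintype.card V
  let W : ℕ → Finset V := fun j => Finset.univ.filter (fun v => p v ≤ j ∧ j < p v + m)
  have hW : ∀ j, (W j).card ≤ m := by
    intro j
    have h : (W j).card ≤ (Finset.Ico (j + 1 - m) (j + 1)).card := by
      apply Finset.card_le_card_of_injOn p
      · intro v hv
        simp only [W, Finset.coe_filter, Finset.mem_univ, true_and, Set.mem_ofPred_eq] at hv
        simp only [Finset.coe_Ico, Set.mem_Ico]
        omega
      · exact hp.injOn
    rw [Nat.card_Ico] at h
    omega
  have hsum : ∑ j ∈ Finset.range (n + m), (W j).card = n * m := by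
    have := Finset.sum_card_bipartiteAbove_eq_sum_card_bipartiteBelow
      (s := Finset.range (n + m)) (t := (Finset.univ : Finset V))
      (fun j v => p v ≤ j ∧ j < p v + m)
    simp only [Finset.bipartiteAbove, Finset.bipartiteBelow] at this
    simp only [W]
    rw [this]
    have h2 : ∀ v : V, ((Finset.range (n + m)).filter (fun j => p v ≤ j ∧ j < p v + m)).card = m := by
      intro v
      have h3 : (Finset.range (n + m)).filter (fun j => p v ≤ j ∧ j < p v + m)
          = Finset.Ico (p v) (p v + m) := by
        ext j
        have := hlt v
        simp only [Finset.mem_filter, Finset.mem_range, Finset.mem_Ico]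
        omega
      rw [h3, Nat.card_Ico]; omega
    simp [h2, n]
  have hlow : A.card * (m - l) ≤
      ∑ j ∈ Finset.range (n + m), (E.filter (fun e => ∀ v ∈ e, v ∈ W j)).card := by
    have := Finset.sum_card_bipartiteAbove_eq_sum_card_bipartiteBelow
      (s := Finset.range (n + m)) (t := A) (fun j e => ∀ v ∈ e, v ∈ W j)
    simp only [Finset.bipartiteAbove, Finset.bipartiteBelow] at this
    calc A.card * (m - l) ≤ ∑ e ∈ A, ((Finset.range (n + m)).filter
            (fun j => ∀ v ∈ e, v ∈ W j)).card := by
          rw [← smul_eq_mul]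
          apply Finset.card_nsmul_le_sum
          intro e he
          have hs := hA e he
          induction e with | _ u v => ?_
          have h1 := hs u (by simp) v (by simp)
          have h2 := hs v (by simp) u (by simp)
          have hu := hlt u
          have hv := hlt v
          calc m - l ≤ (Finset.Ico (max (p u) (p v)) (min (p u) (p v) + m)).card := by
                rw [Nat.card_Ico]; omega
            _ ≤ _ := by
                apply Finset.card_le_card
                intro j hj
                simp only [Finset.mem_Ico] at hj
                simp only [W, Finset.mem_filter, Finset.mem_range, Finset.mem_univ, true_and,
                  Sym2.mem_iff, forall_eq_or_imp, forall_eq]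
                omega
      _ = _ := this.symm
      _ ≤ _ := by
          apply Finset.sum_le_sum
          intro j _
          exact Finset.card_le_card (Finset.filter_subset_filter _ hAE)
  calc (A.card : ℝ) * ((m - l : ℕ) : ℝ)
      ≤ ((∑ j ∈ Finset.range (n + m), (E.filter (fun e => ∀ v ∈ e, v ∈ W j)).card : ℕ) : ℝ) := by
        exact_mod_cast hlow
    _ ≤ ∑ j ∈ Finset.range (n + m), c * ((W j).card : ℝ) := by
        push_cast
        exact Finset.sum_le_sum fun j _ => hexp _ (hW j)
    _ = c * (n * m) := by
        rw [← Finset.mul_sum]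
        congr 1
        exact_mod_cast hsum

/-- An edge that is not short straddles one of the marked positions `x * (l + 2) + l + 1`. -/
lemma long_index {V : Type*} (n l : ℕ) (p : V → ℕ) (hlt : ∀ v, p v < n) (e : Sym2 V)
    (he : ¬ ∀ u ∈ e, ∀ v ∈ e, p v ≤ p u + l) :
    ∃ x ∈ Finset.range (n / (l + 2)), ∃ u ∈ e, ∃ v ∈ e,
      p u ≤ x * (l + 2) + l + 1 ∧ x * (l + 2) + l + 1 ≤ p v := by
  push Not at he
  obtain ⟨u, hu, v, hv, h⟩ := he
  have hv' := hlt v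
  have h1 : 0 < (p v + 1) / (l + 2) := Nat.div_pos (by omega) (by omega)
  have h2 : (p v + 1) / (l + 2) ≤ n / (l + 2) := Nat.div_le_div_right hv'
  obtain ⟨x, hx⟩ : ∃ x, (p v + 1) / (l + 2) = x + 1 := ⟨_, (Nat.succ_pred_eq_of_pos h1).symm⟩
  have h3 := Nat.div_add_mod (p v + 1) (l + 2)
  have h4 := Nat.mod_lt (p v + 1) (show l + 2 > 0 by omega)
  rw [hx] at h3 h2
  have h5 : (l + 2) * (x + 1) = x * (l + 2) + l + 2 := by ring
  exact ⟨x, Finset.mem_range.2 (by omega), u, hu, v, hv, by omega, by omega⟩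

/-! ### Existence of suitable families -/

lemma exists_separating {V : Type*} [Fintype V] (e f : Sym2 V) (h : ∀ v, v ∈ e → v ∉ f) :
    ∃ σ : V → ℕ, Function.Injective σ ∧ Separates σ e f := by
  classical
  let i := Fintype.equivFin V
  refine ⟨fun v => if v ∈ e then (i v : ℕ) else Fintype.card V + i v, ?_, Or.inl ?_⟩
  · intro u v huv
    have hu := (i u).2
    have hv := (i v).2
    apply i.injective
    apply Fin.ext
    dsimp only at huv
    split_ifs at huv <;> omega
  · intro u hu w hw
    have hwe : w ∉ e := fun h' => h w h' hw
    have := (i u).2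
    simp only [hu, hwe, if_true, if_false]
    omega

lemma exists_suitable_s13 {V : Type*} [Fintype V] (G : SimpleGraph V) :
    ∃ F : Finset (V → ℕ), PairwiseSuitable G F := by
  classical
  have h : ∀ z : Sym2 V × Sym2 V, ∃ σ : V → ℕ, Function.Injective σ ∧
      ((∀ v, v ∈ z.1 → v ∉ z.2) → Separates σ z.1 z.2) := by
    intro z
    by_cases hz : ∀ v, v ∈ z.1 → v ∉ z.2
    · obtain ⟨σ, h1, h2⟩ := exists_separating _ _ hz
      exact ⟨σ, h1, fun _ => h2⟩
    · exact ⟨fun v => Fintype.equivFin V v,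
        Fin.val_injective.comp (Fintype.equivFin V).injective, fun h' => absurd h' hz⟩
  choose s hs1 hs2 using h
  refine ⟨Finset.univ.image s, ?_, ?_⟩
  · intro σ hσ
    obtain ⟨z, -, rfl⟩ := Finset.mem_image.1 hσ
    exact hs1 z
  · intro e _ f _ hef
    exact ⟨s (e, f), Finset.mem_image_of_mem _ (Finset.mem_univ _), hs2 (e, f) hef⟩

/-! ### Edges long in every order -/

/-- Among the edges `L` that are long in all orders of `F`, at most `d` straddle the same marked
position in every order. -/
lemma long_count {V : Type*} [Fintype V] [DecidableEq V] (d : ℕ) (hd : 3 ≤ d) (G : SimpleGraph V)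
    (F : Finset (V → ℕ)) (hF : PairwiseSuitable G F) (p : (V → ℕ) → V → ℕ)
    (hlt : ∀ σ ∈ F, ∀ v, p σ v < Fintype.card V)
    (hmono : ∀ σ ∈ F, ∀ u v, σ u < σ v → p σ u < p σ v) (l : ℕ)
    (L : Finset (Sym2 V)) (hL : ∀ e ∈ L, e ∈ G.edgeSet)
    (hstar : ∀ v, (L.filter (fun e => v ∈ e)).card ≤ d)
    (hlong : ∀ e ∈ L, ∀ σ ∈ F, ¬ ∀ u ∈ e, ∀ v ∈ e, p σ v ≤ p σ u + l) :
    L.card ≤ d * (Fintype.card V / (l + 2)) ^ F.card := by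
  classical
  set K := Fintype.card V / (l + 2) with hK
  have h : ∀ (e : Sym2 V) (σ : V → ℕ), ∃ x, (e ∈ L → σ ∈ F → (x ∈ Finset.range K ∧
      ∃ u ∈ e, ∃ v ∈ e, p σ u ≤ x * (l + 2) + l + 1 ∧ x * (l + 2) + l + 1 ≤ p σ v)) := by
    intro e σ
    by_cases h : e ∈ L ∧ σ ∈ F
    · obtain ⟨x, hx, hx'⟩ := long_index _ l (p σ) (hlt σ h.2) e (hlong e h.1 σ h.2)
      exact ⟨x, fun _ _ => ⟨hx, hx'⟩⟩
    · exact ⟨0, fun h1 h2 => absurd ⟨h1, h2⟩ h⟩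
  choose x hx using h
  let T : Finset (F → ℕ) := Fintype.piFinset (fun _ => Finset.range K)
  have hT : T.card = K ^ F.card := by simp [T]
  rw [← hT]
  apply Finset.card_le_mul_card_image_of_maps_to (f := fun e (σ : F) => x e σ)
  · intro e he
    simp only [T, Fintype.mem_piFinset]
    exact fun σ => (hx e σ he σ.2).1
  · intro t _
    apply card_le_of_intersecting d hd
    · intro v
      refine le_trans (Finset.card_le_card ?_) (hstar v)
      exact Finset.filter_subset_filter _ (Finset.filter_subset _ _)
    · intro e he f hf
      simp only [Finset.mem_filter] at he hf
      by_contra! hcon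
      obtain ⟨σ, hσ, hsep⟩ := hF.2 e (hL e he.1) f (hL f hf.1) hcon
      obtain ⟨-, u, hu, v, hv, h1, h2⟩ := hx e σ he.1 hσ
      obtain ⟨-, u', hu', v', hv', h1', h2'⟩ := hx f σ hf.1 hσ
      have hxx : x e σ = x f σ := by
        have := congrFun (he.2.trans hf.2.symm) ⟨σ, hσ⟩
        exact this
      rw [hxx] at h1 h2
      rcases hsep with h | h
      · have := hmono σ hσ _ _ (h v hv u' hu'); omega
      · have := hmono σ hσ _ _ (h v' hv' u hu); omega

/-! ### The lower bound -/

theorem stmt13 {V : Type*} [Fintype V] (d : ℕ) (hd : 3 ≤ d) (G : SimpleGraph V)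
    (hreg : ∀ v, (G.neighborSet v).ncard = d)
    (δ ε : ℝ) (hδ0 : 0 < δ) (hδ1 : δ < 1) (hε : 0 < ε)
    (hineq : ((d : ℝ) - 1) / 2 * ((1 + δ) / (1 - δ)) ≤ (d : ℝ) / 2 - 1 / 4)
    (hexp : ∀ S : Set V, (S.ncard : ℝ) ≤ ε * Fintype.card V →
      (({e ∈ G.edgeSet | ∀ v ∈ e, v ∈ S}).ncard : ℝ) ≤ (1 + δ) * S.ncard)
    (hn : 4 * ((d : ℝ) + 1) * (1 / (δ * ε)) ^ ((d : ℝ) / 2) < (Fintype.card V : ℝ)) :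
    ⌈(d : ℝ) / 2⌉₊ ≤ sdim G := by
  classical
  have hne : {k | ∃ F : Finset (V → ℕ), PairwiseSuitable G F ∧ F.card = k}.Nonempty := by
    obtain ⟨F, hF⟩ := exists_suitable_s13 G
    exact ⟨_, F, hF, rfl⟩
  obtain ⟨F, hF, hcard⟩ := Nat.sInf_mem hne
  unfold sdim
  rw [← hcard]
  by_contra! hcon
  have hr : F.card < (d : ℝ) / 2 := Nat.lt_ceil.1 hcon
  have hr' : (F.card : ℝ) ≤ ((d : ℝ) - 1) / 2 := by
    have h1 : 2 * F.card < d := by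
      have : (2 : ℝ) * F.card < d := by linarith
      exact_mod_cast this
    have h2 : (2 * F.card + 1 : ℝ) ≤ d := by exact_mod_cast h1
    linarith
  have hd' : (3 : ℝ) ≤ d := by exact_mod_cast hd
  set n := Fintype.card V with hndef
  have hX0 : 0 < 1 / (δ * ε) := by positivity
  have hn0 : (0 : ℝ) < n := lt_of_le_of_lt (by positivity) hn
  set E := G.edgeFinset with hE
  have hdeg : ∀ v, G.degree v = d := by
    intro v
    rw [← hreg v, ← SimpleGraph.card_neighborSet_eq_degree, Set.ncard_eq_toFinset_card',
      Set.toFinset_card]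
  have hEcard : (E.card : ℝ) = n * d / 2 := by
    have h := G.sum_degrees_eq_twice_card_edges
    simp only [hdeg, Finset.sum_const, Finset.card_univ, smul_eq_mul] at h
    have h' : ((n * d : ℕ) : ℝ) = ((2 * E.card : ℕ) : ℝ) := by exact_mod_cast h
    push_cast at h'
    linarith
  have hexp' : ∀ S : Finset V, (S.card : ℝ) ≤ ε * n →
      ((E.filter (fun e => ∀ v ∈ e, v ∈ S)).card : ℝ) ≤ (1 + δ) * S.card := by
    intro S hS
    have h := hexp (S : Set V) (by simpa using hS)
    have h2 : {e ∈ G.edgeSet | ∀ v ∈ e, v ∈ (S : Set V)} =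
        ((E.filter (fun e => ∀ v ∈ e, v ∈ S) : Finset (Sym2 V)) : Set (Sym2 V)) := by
      ext e; simp [hE]
    rw [h2, Set.ncard_coe_finset, Set.ncard_coe_finset] at h
    exact h
  have hδ' : (0 : ℝ) < 1 - δ := by linarith
  have hδhalf : δ < 1 / 2 := by
    by_contra! h
    have h3 : 3 ≤ (1 + δ) / (1 - δ) := by rw [le_div_iff₀ hδ']; linarith
    nlinarith
  -- if `ε ≥ 1`, the expansion hypothesis for the whole vertex set fails: `d / 2 > 1 + δ`
  have hε1 : ε < 1 := by
    by_contra! h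
    have h1 := hexp' Finset.univ (by rw [Finset.card_univ]; nlinarith)
    simp only [Finset.mem_univ, implies_true, Finset.filter_true, Finset.card_univ] at h1
    rw [hEcard, ← hndef] at h1
    nlinarith
  have hX1 : 1 ≤ 1 / (δ * ε) := by
    rw [le_div_iff₀ (by positivity)]; nlinarith
  set m := ⌊ε * n⌋₊ with hm
  set l := ⌊δ * m⌋₊ with hl
  have hm1 : (m : ℝ) ≤ ε * n := Nat.floor_le (by positivity)
  have hm2 : ε * n < m + 1 := Nat.lt_floor_add_one _
  have hl1 : (l : ℝ) ≤ δ * m := Nat.floor_le (by positivity)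
  have hl2 : δ * m < l + 1 := Nat.lt_floor_add_one _
  have hlm : l ≤ m := by
    have : (l : ℝ) ≤ m := hl1.trans (by nlinarith [Nat.cast_nonneg (α := ℝ) m])
    exact_mod_cast this
  have hp : ∀ σ : V → ℕ, ∃ p : V → ℕ, σ ∈ F → (Function.Injective p ∧ (∀ v, p v < n) ∧
      ∀ u v, σ u < σ v → p u < p v) := by
    intro σ
    by_cases h : σ ∈ F
    · obtain ⟨p, hp⟩ := exists_rank σ (hF.1 σ h)
      exact ⟨p, fun _ => hp⟩
    · exact ⟨σ, fun h' => absurd h' h⟩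
  choose p hp using hp
  let Sh : (V → ℕ) → Finset (Sym2 V) := fun σ =>
    E.filter (fun e => ∀ u ∈ e, ∀ v ∈ e, p σ v ≤ p σ u + l)
  have hm0 : 0 < m := by
    -- `n > 1 / (δ ε)`, since the exponent `d / 2` is at least `1`
    have h1 : 1 / (δ * ε) ≤ (1 / (δ * ε)) ^ ((d : ℝ) / 2) :=
      Real.self_le_rpow_of_one_le hX1 (by linarith)
    have h2 : 1 / (δ * ε) < n := by nlinarith
    rw [div_lt_iff₀ (by positivity)] at h2
    exact Nat.floor_pos.2 (by nlinarith [mul_pos hn0 hε])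
  have hm0' : (0 : ℝ) < m := by exact_mod_cast hm0
  have hSh : ∀ σ ∈ F, ((Sh σ).card : ℝ) ≤ n * ((1 + δ) / (1 - δ)) := by
    intro σ hσ
    have h := short_count E (p σ) (hp σ hσ).1 (hp σ hσ).2.1 m l (1 + δ)
      (fun S hS => hexp' S (le_trans (by exact_mod_cast hS) hm1)) (Sh σ)
      (Finset.filter_subset _ _) (fun e he => (Finset.mem_filter.1 he).2)
    rw [Nat.cast_sub hlm] at h
    rw [← mul_div_assoc, le_div_iff₀ hδ']
    have h2 : ((Sh σ).card : ℝ) * ((1 - δ) * m) ≤ (Sh σ).card * (m - l) := by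
      apply mul_le_mul_of_nonneg_left _ (Nat.cast_nonneg _)
      linarith
    have h3 : ((Sh σ).card : ℝ) * (1 - δ) * m ≤ n * (1 + δ) * m := by
      calc _ = ((Sh σ).card : ℝ) * ((1 - δ) * m) := by ring
        _ ≤ _ := h2.trans h
        _ = _ := by ring
    exact le_of_mul_le_mul_right h3 hm0'
  have hU : ((F.biUnion Sh).card : ℝ) ≤ n * ((d : ℝ) / 2 - 1 / 4) := by
    calc ((F.biUnion Sh).card : ℝ) ≤ ∑ σ ∈ F, ((Sh σ).card : ℝ) := by
          exact_mod_cast Finset.card_biUnion_le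
      _ ≤ F.card • (n * ((1 + δ) / (1 - δ))) := Finset.sum_le_card_nsmul _ _ _ hSh
      _ = n * (F.card * ((1 + δ) / (1 - δ))) := by rw [nsmul_eq_mul]; ring
      _ ≤ n * (((d : ℝ) - 1) / 2 * ((1 + δ) / (1 - δ))) := by gcongr
      _ ≤ _ := by gcongr
  have hLlow : (n : ℝ) / 4 ≤ ((E \ F.biUnion Sh).card : ℝ) := by
    have h : (E.card : ℝ) ≤ (E \ F.biUnion Sh).card + (F.biUnion Sh).card := by
      exact_mod_cast Finset.card_le_card_sdiff_add_card
    rw [hEcard] at h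
    linarith
  have hLup := long_count d hd G F hF p (fun σ hσ => (hp σ hσ).2.1) (fun σ hσ => (hp σ hσ).2.2) l
    (E \ F.biUnion Sh) (fun e he => by simpa [hE] using (Finset.mem_sdiff.1 he).1)
    (by
      intro v
      rw [← hdeg v, ← SimpleGraph.card_incidenceFinset_eq_degree]
      apply Finset.card_le_card
      intro e he
      simp only [Finset.mem_filter, Finset.mem_sdiff, hE, SimpleGraph.mem_edgeFinset] at he
      simp only [SimpleGraph.mem_incidenceFinset]
      exact ⟨he.1.1, he.2⟩)
    (by
      intro e he σ hσ hs
      rw [Finset.mem_sdiff] at he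
      exact he.2 (Finset.mem_biUnion.2 ⟨σ, hσ, Finset.mem_filter.2 ⟨he.1, hs⟩⟩))
  have hK : ((n / (l + 2) : ℕ) : ℝ) ≤ 1 / (δ * ε) := by
    refine Nat.cast_div_le.trans ?_
    push_cast
    rw [div_le_div_iff₀ (by positivity) (by positivity)]
    -- `δ ε n < δ (m + 1) < (l + 1) + 1`
    nlinarith
  have hpow : ((n / (l + 2) : ℕ) : ℝ) ^ F.card ≤ (1 / (δ * ε)) ^ ((d : ℝ) / 2) := by
    calc ((n / (l + 2) : ℕ) : ℝ) ^ F.card ≤ (1 / (δ * ε)) ^ F.card := by gcongr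
      _ = (1 / (δ * ε)) ^ (F.card : ℝ) := (Real.rpow_natCast _ _).symm
      _ ≤ _ := Real.rpow_le_rpow_of_exponent_le hX1 hr.le
  have hLup' : ((E \ F.biUnion Sh).card : ℝ) ≤ d * ((n / (l + 2) : ℕ) : ℝ) ^ F.card := by
    exact_mod_cast hLup
  have hXp : 0 < (1 / (δ * ε)) ^ ((d : ℝ) / 2) := Real.rpow_pos_of_pos hX0 _
  have : (d : ℝ) * ((n / (l + 2) : ℕ) : ℝ) ^ F.card ≤ d * (1 / (δ * ε)) ^ ((d : ℝ) / 2) := by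
    gcongr
  linarith
end
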